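/- arXiv:1103.5519 — 4 statements merged into one kernel-verified Lean document; each statement's English description precedes it below -/
import Mathlib

section
/- There exists an odd unimodular lattice L in dimension 36 having minimum norm 3 with σ(L) = 20. -/
open scoped RealInnerProductSpace

noncomputable section

/-- The norm `(x, x)` of a vector `x ∈ ℝⁿ` (squared Euclidean length). -/
def normOf {n : ℕ} (x : EuclideanSpace ℝ (Fin n)) : ℝ := ⟪x, x⟫

/-- The dual `L* = {x ∈ ℝⁿ : (x,y) ∈ ℤ for all y ∈ L}` of a set of vectors. -/
def dualSet {n : ℕ} (L : Set (EuclideanSpace ℝ (Fin n))) : Set (EuclideanSpace ℝ (Fin n)) :=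
  {x | ∀ y ∈ L, ∃ m : ℤ, ⟪x, y⟫ = (m : ℝ)}

/-- `L` is a unimodular lattice: `L = L*`. -/
def IsUnimodularLattice {n : ℕ} (L : Set (EuclideanSpace ℝ (Fin n))) : Prop :=
  L = dualSet L

/-- `L` is odd: some vector of `L` has odd (integral) norm. -/
def IsOddLattice {n : ℕ} (L : Set (EuclideanSpace ℝ (Fin n))) : Prop :=
  ∃ x ∈ L, ∃ m : ℤ, Odd m ∧ normOf x = (m : ℝ)

/-- The even sublattice `L₀ = {x ∈ L : (x,x) even}`. -/
def evenSublattice {n : ℕ} (L : Set (EuclideanSpace ℝ (Fin n))) :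
    Set (EuclideanSpace ℝ (Fin n)) :=
  {x | x ∈ L ∧ ∃ m : ℤ, normOf x = 2 * (m : ℝ)}

/-- The shadow `S(L) = L₀* \ L`. -/
def shadow {n : ℕ} (L : Set (EuclideanSpace ℝ (Fin n))) : Set (EuclideanSpace ℝ (Fin n)) :=
  dualSet (evenSublattice L) \ L

/-- `L` has minimum norm `r`: `r` is the least norm among nonzero vectors of `L`. -/
def HasMinNorm {n : ℕ} (L : Set (EuclideanSpace ℝ (Fin n))) (r : ℝ) : Prop :=
  IsLeast {s : ℝ | ∃ x ∈ L, x ≠ 0 ∧ normOf x = s} r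

/-- The shadow `S(L)` has minimum norm `r`. -/
def HasShadowMinNorm {n : ℕ} (L : Set (EuclideanSpace ℝ (Fin n))) (r : ℝ) : Prop :=
  IsLeast {s : ℝ | ∃ x ∈ shadow L, normOf x = s} r

/-- `σ(L) = r`, i.e. `4 · min(S(L)) = r`. -/
def HasSigma {n : ℕ} (L : Set (EuclideanSpace ℝ (Fin n))) (r : ℝ) : Prop :=
  ∃ s : ℝ, HasShadowMinNorm L s ∧ r = 4 * s

/-- The number of vectors of norm `r` in `L`; when `L` has minimum norm `r`,
this is the kissing number of `L`. -/
def numVecsOfNorm {n : ℕ} (L : Set (EuclideanSpace ℝ (Fin n))) (r : ℝ) : ℕ :=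
  Set.ncard {x ∈ L | normOf x = r}

/-! ### The integer layer

`rootMat` has as columns the 36 positive roots of `E₆` written in the basis of simple roots.
Its rows generate, together with twice the dual of the binary residue code, a self-dual
`ℤ/4`-code of length 36; the lattice is Construction A of this code. -/

/-- Coefficients of the positive roots of `E₆`. -/
def rootMat : Matrix (Fin 6) (Fin 36) ℤ := !![
  1, 0, 0, 0, 0, 0, 1, 0, 0, 0, 0, 1, 0, 0, 0, 0, 1, 1, 0, 0, 0, 1, 1, 0, 0, 1, 1, 0, 1, 1, 0, 1, 1, 1, 1, 1;
  0, 1, 0, 0, 0, 0, 1, 1, 0, 0, 0, 1, 1, 1, 0, 0, 1, 1, 1, 1, 0, 1, 1, 1, 1, 1, 1, 1, 1, 2, 1, 2, 1, 2, 2, 2;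
  0, 0, 1, 0, 0, 0, 0, 1, 1, 1, 0, 1, 1, 1, 1, 1, 1, 1, 1, 1, 1, 1, 1, 1, 2, 1, 2, 2, 2, 2, 2, 2, 2, 2, 3, 3;
  0, 0, 0, 1, 0, 0, 0, 0, 1, 0, 1, 0, 1, 0, 1, 1, 1, 0, 1, 1, 1, 1, 1, 1, 1, 1, 1, 1, 1, 1, 2, 1, 2, 2, 2, 2;
  0, 0, 0, 0, 1, 0, 0, 0, 0, 0, 1, 0, 0, 0, 1, 0, 0, 0, 1, 0, 1, 1, 0, 1, 0, 1, 0, 1, 1, 0, 1, 1, 1, 1, 1, 1;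
  0, 0, 0, 0, 0, 1, 0, 0, 0, 1, 0, 0, 0, 1, 0, 1, 0, 1, 0, 1, 1, 0, 1, 1, 1, 1, 1, 1, 1, 1, 1, 1, 1, 1, 1, 2]

/-- Integer combination of the rows. -/
def comb (a : Fin 6 → ℤ) : Fin 36 → ℤ := fun i => ∑ j, a j * rootMat j i

/-- Integer inner product. -/
def dot (x y : Fin 36 → ℤ) : ℤ := ∑ i, x i * y i

def InTors (t : Fin 36 → ℤ) : Prop := ∀ j, 2 ∣ dot (rootMat j) t

def InCode (z : Fin 36 → ℤ) : Prop :=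
  ∃ (a : Fin 6 → ℤ) (s : Fin 36 → ℤ), InTors s ∧ ∀ i, z i = comb a i + 2 * s i

def tripleVec : Fin 36 → ℤ := ![1, 1, 0, 0, 0, 0, 1, 0, 0, 0, 0, 0, 0, 0, 0, 0, 0, 0, 0, 0, 0, 0, 0, 0, 0, 0, 0, 0, 0, 0, 0, 0, 0, 0, 0, 0]

def shadVec : Fin 36 → ℤ := ![-1, 1, 1, 1, 0, 1, -1, 1, 1, -1, 0, 1, -1, -1, 0, 1, -1, 1, 0, -1, 0, 0, 1, 0, -1, 0, -1, 0, 0, 1, 0, 0, 0, 0, 0, 0]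

def shadAux : Fin 36 → ℤ := ![-1, 0, 0, 0, -1, 0, -1, 0, 0, -1, -1, 0, -1, -1, -1, 0, -1, 0, -1, -1, -1, -1, 0, -1, -1, -1, -1, -1, -1, 0, -1, -1, -1, -1, -1, -1]

lemma dot_symm (x y : Fin 36 → ℤ) : dot x y = dot y x := by
  simp only [dot, mul_comm]

lemma dot_add_left (x y z : Fin 36 → ℤ) : dot (fun i => x i + y i) z = dot x z + dot y z := by
  simp only [dot, add_mul, Finset.sum_add_distrib]

lemma dot_mul_left (c : ℤ) (x z : Fin 36 → ℤ) : dot (fun i => c * x i) z = c * dot x z := by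
  simp only [dot, Finset.mul_sum, mul_assoc]

lemma dot_add_right (x y z : Fin 36 → ℤ) : dot z (fun i => x i + y i) = dot z x + dot z y := by
  simp only [dot, mul_add, Finset.sum_add_distrib]

lemma dot_mul_right (c : ℤ) (x z : Fin 36 → ℤ) : dot z (fun i => c * x i) = c * dot z x := by
  rw [dot_symm, dot_mul_left, dot_symm]

lemma dot_comb_left (a : Fin 6 → ℤ) (z : Fin 36 → ℤ) :
    dot (comb a) z = ∑ j, a j * dot (rootMat j) z := by
  simp only [dot, comb, Finset.sum_mul, Finset.mul_sum, mul_assoc]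
  exact Finset.sum_comm

lemma gram4 : ∀ j k, 4 ∣ dot (rootMat j) (rootMat k) := by decide +kernel

lemma gram8 : ∀ j, 8 ∣ dot (rootMat j) (rootMat j) := by decide +kernel

lemma dot_comb_row (a : Fin 6 → ℤ) (k : Fin 6) : 4 ∣ dot (comb a) (rootMat k) := by
  rw [dot_comb_left]
  exact Finset.dvd_sum fun j _ => (gram4 j k).mul_left _

lemma dot_comb_comb (a b : Fin 6 → ℤ) : 4 ∣ dot (comb a) (comb b) := by
  rw [dot_symm, dot_comb_left]
  refine Finset.dvd_sum fun j _ => ?_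
  rw [dot_symm]
  exact (dot_comb_row a j).mul_left _

lemma dot_comb_self (a : Fin 6 → ℤ) : 8 ∣ dot (comb a) (comb a) := by
  choose m hm using gram4
  choose d hd using gram8
  have hs : ∀ j k, dot (rootMat j) (rootMat k) = dot (rootMat k) (rootMat j) :=
    fun j k => dot_symm _ _
  have h1 : dot (comb a) (comb a)
      = ∑ j, a j * ∑ k, a k * dot (rootMat k) (rootMat j) := by
    rw [dot_comb_left]
    refine Finset.sum_congr rfl fun j _ => ?_
    rw [dot_symm, dot_comb_left]
  rw [h1]
  simp only [Fin.sum_univ_six]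
  rw [hd 0, hd 1, hd 2, hd 3, hd 4, hd 5, hs 1 0, hs 2 0, hs 3 0, hs 4 0, hs 5 0, hs 2 1, hs 3 1,
    hs 4 1, hs 5 1, hs 3 2, hs 4 2, hs 5 2, hs 4 3, hs 5 3, hs 5 4]
  simp only [hm]
  exact ⟨a 0 ^ 2 * d 0 + a 1 ^ 2 * d 1 + a 2 ^ 2 * d 2 + a 3 ^ 2 * d 3 + a 4 ^ 2 * d 4
    + a 5 ^ 2 * d 5 + a 0 * a 1 * m 0 1 + a 0 * a 2 * m 0 2 + a 0 * a 3 * m 0 3 + a 0 * a 4 * m 0 4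
    + a 0 * a 5 * m 0 5 + a 1 * a 2 * m 1 2 + a 1 * a 3 * m 1 3 + a 1 * a 4 * m 1 4
    + a 1 * a 5 * m 1 5 + a 2 * a 3 * m 2 3 + a 2 * a 4 * m 2 4 + a 2 * a 5 * m 2 5
    + a 3 * a 4 * m 3 4 + a 3 * a 5 * m 3 5 + a 4 * a 5 * m 4 5, by ring⟩

lemma dot_comb_tors (a : Fin 6 → ℤ) {t : Fin 36 → ℤ} (ht : InTors t) : 2 ∣ dot (comb a) t := by
  rw [dot_comb_left]
  exact Finset.dvd_sum fun j _ => (ht j).mul_left _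

lemma dot_self_parity (t : Fin 36 → ℤ) : 2 ∣ dot t t - dot 1 t := by
  have : dot t t - dot 1 t = ∑ i, (t i * t i - 1 * t i) := by
    simp only [dot, Finset.sum_sub_distrib, Pi.one_apply]
  rw [this]
  refine Finset.dvd_sum fun i _ => ?_
  rcases Int.even_or_odd' (t i) with ⟨k, h | h⟩ <;> rw [h]
  · exact ⟨2 * k * k - k, by ring⟩
  · exact ⟨2 * k * k + k, by ring⟩

lemma inTors_add {s t : Fin 36 → ℤ} (hs : InTors s) (ht : InTors t) :
    InTors (fun i => s i + t i) := fun j => by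
  rw [dot_add_right]; exact dvd_add (hs j) (ht j)

lemma inTors_triple : InTors tripleVec := by unfold InTors; decide +kernel

lemma triple_self : dot tripleVec tripleVec = 3 := by decide +kernel

lemma inCode_two_mul {t : Fin 36 → ℤ} (ht : InTors t) : InCode (fun i => 2 * t i) :=
  ⟨0, t, ht, fun i => by simp [comb]⟩

lemma inCode_row (j : Fin 6) : InCode (rootMat j) := by
  refine ⟨Pi.single j 1, 0, fun k => by simp [dot], fun i => ?_⟩
  simp [comb, Pi.single_apply]

lemma inCode_dot {z w : Fin 36 → ℤ} (hz : InCode z) (hw : InCode w) : 4 ∣ dot z w := by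
  obtain ⟨a, s, hs, h1⟩ := hz
  obtain ⟨b, t, ht, h2⟩ := hw
  obtain rfl : z = fun i => comb a i + 2 * s i := funext h1
  obtain rfl : w = fun i => comb b i + 2 * t i := funext h2
  have e : dot (fun i => comb a i + 2 * s i) (fun i => comb b i + 2 * t i)
      = dot (comb a) (comb b) + 2 * dot (comb a) t + 2 * dot (comb b) s + 4 * dot s t := by
    rw [dot_add_left, dot_add_right, dot_add_right, dot_mul_left, dot_mul_left, dot_mul_right,
      dot_mul_right, dot_symm s (comb b)]
    ring
  rw [e]
  have := dot_comb_comb a b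
  have := dot_comb_tors a ht
  have := dot_comb_tors b hs
  omega

/-- Explicit torsion vector attached to a coordinate. -/
def chk (i : Fin 36) : Fin 36 → ℤ := fun k =>
  (if k = i then 1 else 0) + ∑ j : Fin 6, if k = Fin.castLE (by norm_num) j then rootMat j i else 0

lemma inTors_chk : ∀ i, InTors (chk i) := by unfold InTors; decide +kernel

lemma dot_chk (z : Fin 36 → ℤ) (i : Fin 36) :
    dot z (chk i) = z i + comb (fun j => z (Fin.castLE (by norm_num) j)) i := by
  simp only [dot, chk, comb, mul_add, Finset.sum_add_distrib, Finset.mul_sum]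
  rw [Finset.sum_comm]
  simp

lemma exists_comb {z : Fin 36 → ℤ} (h : ∀ t, InTors t → 2 ∣ dot z t) :
    ∃ (a : Fin 6 → ℤ) (s : Fin 36 → ℤ), ∀ i, z i = comb a i + 2 * s i := by
  have hex : ∀ i, ∃ m, z i = comb (fun j => z (Fin.castLE (by norm_num) j)) i + 2 * m := by
    intro i
    have := h _ (inTors_chk i)
    rw [dot_chk] at this
    obtain ⟨c, hc⟩ := this
    exact ⟨c - comb (fun j => z (Fin.castLE (by norm_num) j)) i, by linarith⟩
  choose s hs using hex
  exact ⟨_, s, hs⟩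

lemma inCode_of {z : Fin 36 → ℤ} (h : ∀ t, InTors t → 2 ∣ dot z t)
    (h4 : ∀ j, 4 ∣ dot z (rootMat j)) : InCode z := by
  obtain ⟨a, s, hs⟩ := exists_comb h
  refine ⟨a, s, fun j => ?_, hs⟩
  have := h4 j
  obtain rfl : z = fun i => comb a i + 2 * s i := funext hs
  rw [dot_add_left, dot_mul_left, dot_symm s] at this
  have := dot_comb_row a j
  omega

lemma inCode_of_dual {w : Fin 36 → ℤ} (h : ∀ z, InCode z → 4 ∣ dot w z) : InCode w := by
  refine inCode_of (fun t ht => ?_) fun j => h _ (inCode_row j)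
  have := h _ (inCode_two_mul ht)
  rw [dot_mul_right] at this
  omega

lemma weights : ∀ b : Fin 6 → Fin 2,
    (b ≠ 0 → 16 ≤ ∑ i, (∑ j, ((b j : ℕ) : ℤ) * rootMat j i) % 2) ∧
      16 ≤ ∑ i, (1 + ∑ j, ((b j : ℕ) : ℤ) * rootMat j i) % 2 := by
  decide +kernel

/-- Reduction of the coefficients modulo two. -/
def red (a : Fin 6 → ℤ) : Fin 6 → Fin 2 := fun j => if 2 ∣ a j then 0 else 1

lemma comb_red (a : Fin 6 → ℤ) (i : Fin 36) :
    ∃ m, comb a i = (∑ j, ((red a j : ℕ) : ℤ) * rootMat j i) + 2 * m := by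
  have h : ∀ j, ∃ m, a j = ((red a j : ℕ) : ℤ) + 2 * m := by
    intro j
    by_cases hj : 2 ∣ a j
    · obtain ⟨m, hm⟩ := hj
      exact ⟨m, by simp [red, hm]⟩
    · refine ⟨a j / 2, ?_⟩
      simp only [red, hj, if_false]
      norm_num
      omega
  choose m hm using h
  refine ⟨∑ j, m j * rootMat j i, ?_⟩
  rw [comb, Finset.mul_sum, ← Finset.sum_add_distrib]
  refine Finset.sum_congr rfl fun j _ => ?_
  linear_combination rootMat j i * hm j

lemma mod_le_sq (x : ℤ) : x % 2 ≤ x * x := by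
  rcases eq_or_ne x 0 with rfl | h
  · simp
  · have : 0 < x * x := mul_self_pos.mpr h
    omega

lemma le_dot_self (z : Fin 36 → ℤ) : ∑ i, z i % 2 ≤ dot z z :=
  Finset.sum_le_sum fun i _ => mod_le_sq (z i)

lemma cols_ne_zero : ∀ i, ∃ j, ¬ 2 ∣ rootMat j i := by decide +kernel

lemma cols_distinct : ∀ i k, i ≠ k → ∃ j, ¬ 2 ∣ rootMat j i + rootMat j k := by decide +kernel

lemma tors_norm {s : Fin 36 → ℤ} (hs : InTors s) (h0 : s ≠ 0) : 3 ≤ dot s s := by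
  by_cases hev : ∀ i, 2 ∣ s i
  · obtain ⟨i, hi⟩ := Function.ne_iff.mp h0
    have h1 : s i * s i ≤ dot s s :=
      Finset.single_le_sum (f := fun i => s i * s i) (fun k _ => mul_self_nonneg (s k))
        (Finset.mem_univ i)
    obtain ⟨m, hm⟩ := hev i
    have hm0 : m ≠ 0 := by rintro rfl; simp [hm] at hi
    have : 0 < m * m := mul_self_pos.mpr hm0
    rw [hm] at h1
    nlinarith
  · set T : Finset (Fin 36) := Finset.univ.filter fun i => ¬ 2 ∣ s i with hT
    have hcard : (T.card : ℤ) ≤ dot s s := by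
      refine le_trans (le_of_eq ?_) (le_dot_self s)
      rw [hT, Finset.card_filter]
      push_cast
      refine Finset.sum_congr rfl fun i _ => ?_
      split_ifs <;> omega
    have hsum : ∀ j, 2 ∣ ∑ i ∈ T, rootMat j i := by
      intro j
      have h1 : 2 ∣ dot (rootMat j) s - ∑ i ∈ T, rootMat j i := by
        rw [hT, Finset.sum_filter, dot, ← Finset.sum_sub_distrib]
        refine Finset.dvd_sum fun i _ => ?_
        rcases Int.even_or_odd' (s i) with ⟨k, h | h⟩
        · have : 2 ∣ s i := ⟨k, h⟩
          simp only [this, not_true, if_false, sub_zero]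
          exact this.mul_left _
        · have : ¬ 2 ∣ s i := by omega
          simp only [this, not_false_eq_true, if_true]
          exact ⟨rootMat j i * k, by rw [h]; ring⟩
      have := hs j
      omega
    by_contra hlt
    have hc : T.card = 0 ∨ T.card = 1 ∨ T.card = 2 := by omega
    rcases hc with hc | hc | hc
    · apply hev
      intro i
      by_contra hi
      have : i ∈ T := Finset.mem_filter.mpr ⟨Finset.mem_univ i, hi⟩
      rw [Finset.card_eq_zero.mp hc] at this
      simp at this
    · obtain ⟨i, hi⟩ := Finset.card_eq_one.mp hc
      obtain ⟨j, hj⟩ := cols_ne_zero i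
      have := hsum j
      rw [hi, Finset.sum_singleton] at this
      exact hj this
    · obtain ⟨i, k, hik, hi⟩ := Finset.card_eq_two.mp hc
      obtain ⟨j, hj⟩ := cols_distinct i k hik
      have := hsum j
      rw [hi, Finset.sum_pair hik] at this
      exact hj this

lemma code_norm {z : Fin 36 → ℤ} (hz : InCode z) (h0 : z ≠ 0) : 12 ≤ dot z z := by
  obtain ⟨a, s, hs, h1⟩ := hz
  by_cases hb : red a = 0
  · have hev : ∀ i, ∃ m, z i = 2 * m := by
      intro i
      obtain ⟨m, hm⟩ := comb_red a i
      rw [hb] at hm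
      simp at hm
      exact ⟨m + s i, by rw [h1, hm]; ring⟩
    choose m hm using hev
    obtain rfl : z = fun i => 2 * m i := funext hm
    have hmt : InTors m := by
      intro j
      have h2 := inCode_dot (inCode_row j) ⟨a, s, hs, h1⟩
      rw [dot_mul_right] at h2
      omega
    have hm0 : m ≠ 0 := by rintro rfl; apply h0; funext i; simp
    have := tors_norm hmt hm0
    rw [dot_mul_left, dot_mul_right]
    omega
  · have h2 := (weights (red a)).1 hb
    have h3 := le_dot_self z
    have h4 : ∑ i, z i % 2 = ∑ i, (∑ j, ((red a j : ℕ) : ℤ) * rootMat j i) % 2 := by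
      refine Finset.sum_congr rfl fun i _ => ?_
      obtain ⟨m, hm⟩ := comb_red a i
      rw [h1, hm]
      omega
    omega

lemma shad_norm {w s : Fin 36 → ℤ} {a : Fin 6 → ℤ} (h : ∀ i, w i = 1 + (comb a i + 2 * s i))
    (h4 : ∀ j, 4 ∣ dot w (rootMat j)) : 20 ≤ dot w w := by
  have h16 : 16 ≤ dot w w := by
    have h2 := (weights (red a)).2
    have h3 := le_dot_self w
    have h4 : ∑ i, w i % 2 = ∑ i, (1 + ∑ j, ((red a j : ℕ) : ℤ) * rootMat j i) % 2 := by
      refine Finset.sum_congr rfl fun i _ => ?_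
      obtain ⟨m, hm⟩ := comb_red a i
      rw [h, hm]
      omega
    omega
  obtain rfl : w = fun i => (1 : Fin 36 → ℤ) i + (comb a i + 2 * s i) := funext h
  have h5 : 4 ∣ dot (fun i => (1 : Fin 36 → ℤ) i + (comb a i + 2 * s i)) (comb a) := by
    rw [dot_symm, dot_comb_left]
    refine Finset.dvd_sum fun j _ => ?_
    rw [dot_symm]
    exact (h4 j).mul_left _
  have h6 := dot_comb_self a
  have h7 := dot_self_parity s
  have h8 : dot 1 1 = 36 := by simp [dot]
  simp only [dot_add_left, dot_add_right, dot_mul_left, dot_mul_right] at h5 h16 ⊢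
  rw [dot_symm (comb a) 1, dot_symm s 1] at *
  rw [dot_symm s (comb a)] at *
  omega

lemma shad_dichotomy {w : Fin 36 → ℤ} (h : ∀ z, InCode z → 8 ∣ dot z z → 4 ∣ dot w z) :
    InCode w ∨ 20 ≤ dot w w := by
  have h4 : ∀ j, 4 ∣ dot w (rootMat j) := fun j => h _ (inCode_row j) (gram8 j)
  have hE : ∀ t, InTors t → 2 ∣ dot t t → 2 ∣ dot w t := by
    intro t ht h2
    have := h _ (inCode_two_mul ht) (by rw [dot_mul_left, dot_mul_right]; omega)
    rw [dot_mul_right] at this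
    omega
  have hO : ∀ t, InTors t → ¬ 2 ∣ dot t t → 2 ∣ dot w t + dot w tripleVec := by
    intro t ht h2
    rw [← dot_add_right]
    refine hE _ (inTors_add ht inTors_triple) ?_
    rw [dot_add_left, dot_add_right, dot_add_right, triple_self, dot_symm tripleVec t]
    omega
  by_cases h0 : 2 ∣ dot w tripleVec
  · left
    refine inCode_of (fun t ht => ?_) h4
    by_cases h2 : 2 ∣ dot t t
    · exact hE t ht h2
    · have := hO t ht h2
      omega
  · right
    have h1 : ∀ t, InTors t → 2 ∣ dot (fun i => w i + (-1) * (1 : Fin 36 → ℤ) i) t := by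
      intro t ht
      rw [dot_add_left, dot_mul_left]
      have hp := dot_self_parity t
      by_cases h2 : 2 ∣ dot t t
      · have := hE t ht h2
        omega
      · have := hO t ht h2
        omega
    obtain ⟨a, s, hs⟩ := exists_comb h1
    refine shad_norm (a := a) (s := s) (fun i => ?_) h4
    have := hs i
    simp only [Pi.one_apply] at this
    omega

lemma shadVec_eq : ∀ i, shadVec i = 1 + (rootMat 4 i + 2 * shadAux i) := by decide +kernel

lemma shadVec_row : ∀ j, 4 ∣ dot shadVec (rootMat j) := by decide +kernel

lemma shadVec_self : dot shadVec shadVec = 20 := by decide +kernel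

lemma shadVec_triple : ¬ 2 ∣ dot shadVec tripleVec := by decide +kernel

lemma shadVec_dual {z : Fin 36 → ℤ} (hz : InCode z) (h8 : 8 ∣ dot z z) : 4 ∣ dot shadVec z := by
  obtain ⟨b, r, hr, h1⟩ := hz
  obtain rfl : z = fun i => comb b i + 2 * r i := funext h1
  have e1 : 4 ∣ dot shadVec (comb b) := by
    rw [dot_symm, dot_comb_left]
    refine Finset.dvd_sum fun j _ => ?_
    rw [dot_symm]
    exact (shadVec_row j).mul_left _
  have e2 : dot shadVec r = dot 1 r + (dot (rootMat 4) r + 2 * dot shadAux r) := by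
    rw [← dot_mul_left, ← dot_add_left, ← dot_add_left]
    exact congrArg (fun f => dot f r) (funext shadVec_eq)
  have e3 := hr 4
  have e4 := dot_comb_self b
  have e5 := dot_comb_tors b hr
  have e6 := dot_self_parity r
  simp only [dot_add_left, dot_add_right, dot_mul_left, dot_mul_right] at h8 ⊢
  rw [dot_symm r (comb b)] at h8
  omega

lemma shadVec_notin : ¬ InCode shadVec := by
  intro h
  have := inCode_dot h (inCode_two_mul inTors_triple)
  rw [dot_mul_right] at this
  have := shadVec_triple
  omega

/-! ### The lattice -/

/-- Half of an integer vector. -/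
def half (z : Fin 36 → ℤ) : EuclideanSpace ℝ (Fin 36) := WithLp.toLp 2 fun i => (z i : ℝ) / 2

lemma inner_half (z w : Fin 36 → ℤ) : ⟪half z, half w⟫ = (dot z w : ℝ) / 4 := by
  simp only [half, dot, PiLp.inner_apply, RCLike.inner_apply, conj_trivial]
  push_cast
  rw [Finset.sum_div]
  refine Finset.sum_congr rfl fun i _ => ?_
  ring

def lat36 : Set (EuclideanSpace ℝ (Fin 36)) := {x | ∃ z, InCode z ∧ x = half z}

/-- The vector `4 e_i`. -/
def frame (i : Fin 36) : Fin 36 → ℤ := fun k => if k = i then 4 else 0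

lemma frame_inCode (i : Fin 36) : InCode (frame i) := by
  refine ⟨0, fun k => if k = i then 2 else 0, fun j => ?_, fun k => ?_⟩
  · simp [dot]
  · simp only [frame, comb]
    split_ifs <;> simp

lemma frame_self (i : Fin 36) : dot (frame i) (frame i) = 16 := by
  simp [dot, frame]

lemma eq_half {v : EuclideanSpace ℝ (Fin 36)}
    (h : ∀ i, ∃ m : ℤ, ⟪v, half (frame i)⟫ = (m : ℝ)) : ∃ w, v = half w := by
  choose w hw using h
  refine ⟨w, ?_⟩
  ext i
  have h1 := hw i
  simp only [half, frame, PiLp.inner_apply, RCLike.inner_apply, conj_trivial] at h1 ⊢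
  rw [Finset.sum_eq_single i] at h1
  · simp at h1
    rw [← h1]; ring
  · intro k _ hk
    simp [hk]
  · simp

lemma dvd_of_real {k m c : ℤ} (hc : (k : ℝ) / 4 = c * m) : k = 4 * c * m := by
  have : (k : ℝ) = ((4 * c * m : ℤ) : ℝ) := by push_cast; linarith
  exact_mod_cast this

lemma inner_half_int {z w : Fin 36 → ℤ} (h : ∃ m : ℤ, ⟪half z, half w⟫ = (m : ℝ)) :
    4 ∣ dot z w := by
  obtain ⟨m, hm⟩ := h
  rw [inner_half] at hm
  have h1 := dvd_of_real (k := dot z w) (c := 1) (m := m) (by push_cast; linarith)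
  exact ⟨m, by rw [h1]; ring⟩

lemma inner_half_of {z w : Fin 36 → ℤ} (h : 4 ∣ dot z w) :
    ∃ m : ℤ, ⟪half z, half w⟫ = (m : ℝ) := by
  obtain ⟨m, hm⟩ := h
  refine ⟨m, ?_⟩
  rw [inner_half, hm]
  push_cast
  ring

lemma half_inj {z w : Fin 36 → ℤ} (h : half z = half w) : z = w := by
  funext i
  have := congrArg (fun v : EuclideanSpace ℝ (Fin 36) => v i) h
  simp only [half] at this
  have h2 : (z i : ℝ) = w i := by linarith
  exact_mod_cast h2

lemma mem_even {z : Fin 36 → ℤ} (hz : InCode z) (h8 : 8 ∣ dot z z) :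
    half z ∈ evenSublattice lat36 := by
  obtain ⟨m, hm⟩ := h8
  refine ⟨⟨z, hz, rfl⟩, m, ?_⟩
  rw [normOf, inner_half, hm]
  push_cast
  ring

lemma lat36_unimodular : IsUnimodularLattice lat36 := by
  apply Set.Subset.antisymm
  · rintro _ ⟨z, hz, rfl⟩ _ ⟨w, hw, rfl⟩
    exact inner_half_of (inCode_dot hz hw)
  · intro v hv
    obtain ⟨w, rfl⟩ := eq_half fun i => hv _ ⟨_, frame_inCode i, rfl⟩
    exact ⟨w, inCode_of_dual fun z hz => inner_half_int (hv _ ⟨z, hz, rfl⟩), rfl⟩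

lemma norm_triple : normOf (half fun i => 2 * tripleVec i) = 3 := by
  rw [normOf, inner_half, dot_mul_left, dot_mul_right, triple_self]
  norm_num

lemma lat36_min : HasMinNorm lat36 3 := by
  constructor
  · refine ⟨_, ⟨_, inCode_two_mul inTors_triple, rfl⟩, ?_, norm_triple⟩
    intro h
    have := norm_triple
    rw [h] at this
    simp [normOf] at this
  · rintro r ⟨_, ⟨z, hz, rfl⟩, h0, rfl⟩
    have hz0 : z ≠ 0 := by
      rintro rfl
      apply h0
      ext i
      simp [half]
    have h12 : ((12 : ℤ) : ℝ) ≤ dot z z := by exact_mod_cast code_norm hz hz0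
    rw [normOf, inner_half]
    push_cast at h12
    linarith

lemma lat36_shadow : HasShadowMinNorm lat36 5 := by
  constructor
  · refine ⟨half shadVec, ⟨?_, ?_⟩, ?_⟩
    · rintro _ ⟨⟨z, hz, rfl⟩, m, hm⟩
      apply inner_half_of
      apply shadVec_dual hz
      rw [normOf, inner_half] at hm
      have h1 := dvd_of_real (k := dot z z) (c := 2) (m := m) (by push_cast; linarith)
      exact ⟨m, by rw [h1]; ring⟩
    · rintro ⟨z, hz, h⟩
      rw [← half_inj h] at hz
      exact shadVec_notin hz
    · rw [normOf, inner_half, shadVec_self]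
      norm_num
  · rintro r ⟨v, ⟨hv, hn⟩, rfl⟩
    obtain ⟨w, rfl⟩ := eq_half fun i =>
      hv _ (mem_even (frame_inCode i) (by rw [frame_self]; norm_num))
    rcases shad_dichotomy fun z hz h8 => inner_half_int (hv _ (mem_even hz h8)) with h | h
    · exact absurd ⟨w, h, rfl⟩ hn
    · have h20 : ((20 : ℤ) : ℝ) ≤ dot w w := by exact_mod_cast h
      rw [normOf, inner_half]
      push_cast at h20
      linarith

theorem exists_unimodular_dim36_min3_sigma20 :
    ∃ L : Set (EuclideanSpace ℝ (Fin 36)),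
      IsUnimodularLattice L ∧ IsOddLattice L ∧ HasMinNorm L 3 ∧ HasSigma L 20 := by
  refine ⟨lat36, lat36_unimodular, ?_, lat36_min, 5, lat36_shadow, by norm_num⟩
  exact ⟨_, ⟨_, inCode_two_mul inTors_triple, rfl⟩, 3, by decide, by
    rw [norm_triple]; norm_num⟩
end
end

section
/- Let B be a binary doubly even [37,6] code such that the dual code B⊥ has minimum Hamming weight 3. Then the weight enumerator of B is either W_B(y) = 1 + 20y¹⁶ + 42y²⁰ + y²⁴ or W_B(y) = 1 + y¹² + 17y¹⁶ + 45y²⁰. -/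
noncomputable section

/-- The dual code `B⊥ = {x ∈ F₂ⁿ : x·y = 0 for all y ∈ B}`. -/
def dualCode {n : ℕ} (B : Submodule (ZMod 2) (Fin n → ZMod 2)) : Set (Fin n → ZMod 2) :=
  {x | ∀ y ∈ B, ∑ i, x i * y i = 0}

/-- A binary code is doubly even if every codeword has Hamming weight divisible by 4. -/
def IsDoublyEven {n : ℕ} (B : Submodule (ZMod 2) (Fin n → ZMod 2)) : Prop :=
  ∀ c ∈ B, 4 ∣ hammingNorm c

/-- A set of binary words has minimum weight `d`:
`d` is the least Hamming weight among its nonzero elements. -/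
def HasMinWeight {n : ℕ} (S : Set (Fin n → ZMod 2)) (d : ℕ) : Prop :=
  IsLeast {w : ℕ | ∃ c ∈ S, c ≠ 0 ∧ hammingNorm c = w} d

/-- The number of words of Hamming weight `w` in `S`. -/
def weightCount {n : ℕ} (S : Set (Fin n → ZMod 2)) (w : ℕ) : ℕ :=
  Set.ncard {c ∈ S | hammingNorm c = w}


def chi (a : ZMod 2) : ℤ := if a = 0 then 1 else -1

theorem chi_add (a b : ZMod 2) : chi (a + b) = chi a * chi b := by
  revert a b; decide

theorem chi_ne {a : ZMod 2} (h : a ≠ 0) : chi a = -1 := by simp [chi, h]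

theorem sum_chi_word {n : ℕ} (c : Fin n → ZMod 2) :
    ∑ i, chi (c i) = (n : ℤ) - 2 * (hammingNorm c : ℤ) := by
  have h : ∀ i, chi (c i) = 1 - 2 * (if c i ≠ 0 then (1 : ℤ) else 0) := by
    intro i
    by_cases hc : c i = 0 <;> simp [chi, hc]
  simp only [h, Finset.sum_sub_distrib, ← Finset.mul_sum, Finset.sum_boole, hammingNorm]
  simp

open Classical in
/-- A nonzero functional is balanced. -/
theorem sum_chi_functional {n : ℕ} (B : Submodule (ZMod 2) (Fin n → ZMod 2))
    (φ : (Fin n → ZMod 2) → ZMod 2) (hφ : ∀ x y, φ (x + y) = φ x + φ y)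
    (h : ∃ c ∈ B, φ c ≠ 0) :
    ∑ c ∈ Finset.univ.filter (fun c => c ∈ B), chi (φ c) = 0 := by
  obtain ⟨d, hd, hne⟩ := h
  have key : ∑ c ∈ Finset.univ.filter (fun c => c ∈ B), chi (φ c)
      = ∑ c ∈ Finset.univ.filter (fun c => c ∈ B), - chi (φ c) := by
    refine Finset.sum_bij' (fun c _ => c + d) (fun c _ => c - d) ?_ ?_ ?_ ?_ ?_
    · intro c hc
      simp only [Finset.mem_filter, Finset.mem_univ, true_and] at hc ⊢
      exact B.add_mem hc hd
    · intro c hc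
      simp only [Finset.mem_filter, Finset.mem_univ, true_and] at hc ⊢
      exact B.sub_mem hc hd
    · intro c _; simp
    · intro c _; simp
    · intro c _
      rw [hφ, chi_add, chi_ne hne]; ring
  rw [Finset.sum_neg_distrib] at key
  omega

theorem dual_le {n : ℕ} {B : Submodule (ZMod 2) (Fin n → ZMod 2)}
    (hdual : HasMinWeight (dualCode B) 3) (x : Fin n → ZMod 2)
    (hx : x ∈ dualCode B) (h0 : x ≠ 0) : 3 ≤ hammingNorm x :=
  hdual.2 ⟨x, hx, h0, rfl⟩

theorem dual_coord {n : ℕ} {B : Submodule (ZMod 2) (Fin n → ZMod 2)}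
    (hdual : HasMinWeight (dualCode B) 3) (i : Fin n) : ∃ c ∈ B, c i ≠ 0 := by
  by_contra! hcon
  have hm := dual_le hdual (Pi.single i 1) ?_ ?_
  · have hle : hammingNorm (Pi.single i 1 : Fin n → ZMod 2) ≤ 1 := by
      unfold hammingNorm
      refine (Finset.card_le_card (t := {i}) ?_).trans (Finset.card_singleton i).le
      intro k hk
      simp only [Finset.mem_filter, Finset.mem_univ, true_and, Pi.single_apply] at hk
      simp only [Finset.mem_singleton]
      by_contra hk2
      simp [hk2] at hk
    omega
  · intro y hy
    simp [Pi.single_apply, hcon y hy]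
  · simp

theorem dual_pair {n : ℕ} {B : Submodule (ZMod 2) (Fin n → ZMod 2)}
    (hdual : HasMinWeight (dualCode B) 3) (i j : Fin n) (hij : i ≠ j) :
    ∃ c ∈ B, c i + c j ≠ 0 := by
  by_contra! hcon
  have hm := dual_le hdual (Pi.single i 1 + Pi.single j 1) ?_ ?_
  · have hle : hammingNorm (Pi.single i 1 + Pi.single j 1 : Fin n → ZMod 2) ≤ 2 := by
      unfold hammingNorm
      refine (Finset.card_le_card (t := {i, j}) ?_).trans Finset.card_le_two
      intro k hk
      simp only [Finset.mem_filter, Finset.mem_univ, true_and, Pi.add_apply,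
        Pi.single_apply] at hk
      simp only [Finset.mem_insert, Finset.mem_singleton]
      by_contra! hk2
      simp [hk2.1, hk2.2] at hk
    omega
  · intro y hy
    simp [Pi.single_apply, add_mul, Finset.sum_add_distrib, hcon y hy]
  · intro h0
    have := congrFun h0 i
    simp [hij] at this

set_option maxRecDepth 10000 in
set_option maxHeartbeats 2000000 in
theorem weight_enumerator_37_6 {B : Submodule (ZMod 2) (Fin 37 → ZMod 2)}
    (hdim : Module.finrank (ZMod 2) B = 6)
    (hde : IsDoublyEven B)
    (hdual : HasMinWeight (dualCode B) 3) :
    (∀ w : ℕ, weightCount (B : Set (Fin 37 → ZMod 2)) w =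
      if w = 0 then 1 else if w = 16 then 20 else if w = 20 then 42 else
        if w = 24 then 1 else 0) ∨
    (∀ w : ℕ, weightCount (B : Set (Fin 37 → ZMod 2)) w =
      if w = 0 then 1 else if w = 12 then 1 else if w = 16 then 17 else
        if w = 20 then 45 else 0) := by
  classical
  set F : Finset (Fin 37 → ZMod 2) := Finset.univ.filter (fun c => c ∈ B) with hF
  have hmem : ∀ c, c ∈ F ↔ c ∈ B := by intro c; simp [hF]
  have hcard : F.card = 64 := by
    have h1 := Module.card_eq_pow_finrank (K := ZMod 2) (V := B)
    rw [hdim, ZMod.card] at h1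
    rw [hF, ← Fintype.card_subtype]
    simpa using h1
  have m1 : ∑ c ∈ F, ((37 : ℤ) - 2 * (hammingNorm c : ℤ)) = 0 := by
    have h1 : ∀ c : Fin 37 → ZMod 2,
        (37 : ℤ) - 2 * (hammingNorm c : ℤ) = ∑ i, chi (c i) := by
      intro c; rw [sum_chi_word]; norm_num
    simp only [h1]
    rw [Finset.sum_comm]
    refine Finset.sum_eq_zero fun i _ => ?_
    exact sum_chi_functional B (fun c => c i) (fun _ _ => rfl) (dual_coord hdual i)
  have m2 : ∑ c ∈ F, ((37 : ℤ) - 2 * (hammingNorm c : ℤ)) ^ 2 = 37 * 64 := by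
    have h1 : ∀ c : Fin 37 → ZMod 2,
        ((37 : ℤ) - 2 * (hammingNorm c : ℤ)) ^ 2 = ∑ i, ∑ j, chi (c i + c j) := by
      intro c
      simp only [chi_add]
      rw [← Finset.sum_mul_sum, sum_chi_word]; norm_num [sq]
    simp only [h1]
    rw [Finset.sum_comm]
    have h2 : ∀ i : Fin 37, ∑ c ∈ F, ∑ j, chi (c i + c j) = 64 := by
      intro i
      rw [Finset.sum_comm, Finset.sum_eq_single i]
      · have h3 : ∀ a : ZMod 2, chi (a + a) = 1 := by decide
        simp [h3, hcard]
      · intro j _ hji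
        exact sum_chi_functional B (fun c => c i + c j)
          (fun x y => by simp only [Pi.add_apply]; ring) (dual_pair hdual i j hji.symm)
      · simp
    simp [h2]
  set N : ℕ → ℕ := fun w => (F.filter (fun c => hammingNorm c = w)).card with hN
  have hwc : ∀ w, weightCount (B : Set (Fin 37 → ZMod 2)) w = N w := by
    intro w
    rw [weightCount, hN]
    beta_reduce
    rw [← Set.ncard_coe_finset]
    congr 1
    ext c
    simp [hmem]
  have hlt : ∀ c : Fin 37 → ZMod 2, hammingNorm c < 38 := by
    intro c
    have := hammingNorm_le_card_fintype (x := c)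
    simp at this
    omega
  have hbig : ∀ w, 38 ≤ w → N w = 0 := by
    intro w hw
    rw [hN, Finset.card_eq_zero, Finset.filter_eq_empty_iff]
    intro c _ h
    have := hlt c
    omega
  have h4 : ∀ w, ¬ 4 ∣ w → N w = 0 := by
    intro w hw
    rw [hN, Finset.card_eq_zero, Finset.filter_eq_empty_iff]
    intro c hc h
    exact hw (h ▸ hde c ((hmem c).1 hc))
  have h0 : N 0 = 1 := by
    rw [hN, Finset.card_eq_one]
    refine ⟨0, ?_⟩
    ext c
    simp only [Finset.mem_filter, hmem, hammingNorm_eq_zero, Finset.mem_singleton]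
    exact ⟨fun h => h.2, fun h => ⟨h ▸ B.zero_mem, h⟩⟩
  have fib : ∀ f : ℕ → ℤ, ∑ c ∈ F, f (hammingNorm c) = ∑ w ∈ Finset.range 38, (N w : ℤ) * f w := by
    intro f
    rw [← Finset.sum_fiberwise_of_maps_to (s := F) (t := Finset.range 38)
      (g := fun c => hammingNorm c) (fun c _ => Finset.mem_range.2 (hlt c))]
    refine Finset.sum_congr rfl fun w _ => ?_
    rw [Finset.sum_congr rfl (g := fun _ => f w)]
    · simp [hN]
    · intro c hc
      rw [(Finset.mem_filter.1 hc).2]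
  have e0 := fib (fun _ => 1)
  have e1 := fib (fun w => 37 - 2 * (w : ℤ))
  have e2 := fib (fun w => (37 - 2 * (w : ℤ)) ^ 2)
  simp only [m1] at e1
  simp only [m2] at e2
  simp only [Finset.sum_const, hcard] at e0
  clear_value N
  have hz : ∀ w, ¬ 4 ∣ w → (N w : ℤ) = 0 := fun w hw => by simp [h4 w hw]
  simp only [Finset.sum_range_succ, Finset.sum_range_zero] at e0 e1 e2
  norm_num [hz, h0] at e0 e1 e2
  have main : (N 4 = 0 ∧ N 8 = 0 ∧ N 28 = 0 ∧ N 32 = 0 ∧ N 36 = 0) ∧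
      ((N 12 = 0 ∧ N 16 = 20 ∧ N 20 = 42 ∧ N 24 = 1) ∨
       (N 12 = 1 ∧ N 16 = 17 ∧ N 20 = 45 ∧ N 24 = 0)) := by
    have q : 2 * N 12 + 2 * N 24 + 6 * N 8 + 6 * N 28 + 12 * N 4 + 12 * N 32 + 20 * N 36 = 2 := by
      omega
    have z4 : N 4 = 0 := by omega
    have z8 : N 8 = 0 := by omega
    have z28 : N 28 = 0 := by omega
    have z32 : N 32 = 0 := by omega
    have z36 : N 36 = 0 := by omega
    refine ⟨⟨z4, z8, z28, z32, z36⟩, ?_⟩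
    omega
  obtain ⟨⟨z4, z8, z28, z32, z36⟩, ⟨a, b, c, d⟩ | ⟨a, b, c, d⟩⟩ := main
  · left
    intro w
    rw [hwc]
    by_cases hw : 38 ≤ w
    · rw [hbig w hw]
      split_ifs <;> omega
    · by_cases hd : 4 ∣ w
      · obtain ⟨k, rfl⟩ := hd
        have hk : k < 10 := by omega
        interval_cases k <;> simp [h0, z4, z8, z28, z32, z36, a, b, c, d]
      · rw [h4 w hd]
        split_ifs <;> omega
  · right
    intro w
    rw [hwc]
    by_cases hw : 38 ≤ w
    · rw [hbig w hw]
      split_ifs <;> omega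
    · by_cases hd : 4 ∣ w
      · obtain ⟨k, rfl⟩ := hd
        have hk : k < 10 := by omega
        interval_cases k <;> simp [h0, z4, z8, z28, z32, z36, a, b, c, d]
      · rw [h4 w hd]
        split_ifs <;> omega
end
end

section
/- Let B be a binary doubly even [37,6,12] code such that the dual code B⊥ has minimum Hamming weight 3. Then the weight enumerator of B is W_B(y) = 1 + y¹² + 17y¹⁶ + 45y²⁰, and B⊥ has exactly 140 codewords of weight 3. -/
noncomputable section

open Finset

/-- The sign character of `ZMod 2`. -/
def sg (a : ZMod 2) : ℤ := if a = 0 then 1 else -1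

lemma sg_add (a b : ZMod 2) : sg (a + b) = sg a * sg b := by
  revert a b; decide

lemma sum_sg (c : Fin 37 → ZMod 2) : ∑ i, sg (c i) = 37 - 2 * (hammingNorm c : ℤ) := by
  have h : ∀ i, sg (c i) = 1 - 2 * (if c i ≠ 0 then 1 else 0) := by
    intro i; unfold sg; split_ifs <;> simp_all
  simp only [h, Finset.sum_sub_distrib, ← Finset.mul_sum, Finset.sum_boole]
  simp [hammingNorm]

open Classical in
/-- The codewords as a finset. -/
def words (B : Submodule (ZMod 2) (Fin 37 → ZMod 2)) : Finset (Fin 37 → ZMod 2) :=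
  Finset.univ.filter (· ∈ B)

lemma mem_words {B : Submodule (ZMod 2) (Fin 37 → ZMod 2)} {c : Fin 37 → ZMod 2} :
    c ∈ words B ↔ c ∈ B := by simp [words]

attribute [irreducible] words

lemma card_words {B : Submodule (ZMod 2) (Fin 37 → ZMod 2)}
    (hdim : Module.finrank (ZMod 2) B = 6) : (words B).card = 64 := by
  have h := Module.natCard_eq_pow_finrank (K := ZMod 2) (V := B)
  rw [hdim] at h
  have h2 : Nat.card B = (words B).card := by
    classical
    rw [Nat.card_eq_fintype_card]
    exact Fintype.card_of_subtype (words B) (fun c => mem_words)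
  rw [← h2, h]; simp

open Classical in
lemma orth {B : Submodule (ZMod 2) (Fin 37 → ZMod 2)}
    (hdim : Module.finrank (ZMod 2) B = 6) (f : (Fin 37 → ZMod 2) → ZMod 2)
    (hf : ∀ x y, f (x + y) = f x + f y) :
    ∑ c ∈ words B, sg (f c) = if ∀ c ∈ B, f c = 0 then 64 else 0 := by
  split_ifs with h
  · rw [Finset.sum_congr rfl (g := fun _ => (1 : ℤ))]
    · simp [card_words hdim]
    · intro c hc; rw [mem_words] at hc; simp [sg, h c hc]
  · push Not at h
    obtain ⟨d, hd, hd0⟩ := h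
    have : ∑ c ∈ words B, sg (f c) = ∑ c ∈ words B, - sg (f c) := by
      refine Finset.sum_bij' (fun c _ => c + d) (fun c _ => c - d) ?_ ?_ ?_ ?_ ?_
      · intro c hc; rw [mem_words] at hc ⊢; exact (B.add_mem hc hd)
      · intro c hc; rw [mem_words] at hc ⊢; exact (B.sub_mem hc hd)
      · intro c _; simp
      · intro c _; simp
      · intro c _; rw [hf, sg_add]; simp [sg, hd0]
    rw [Finset.sum_neg_distrib] at this
    omega

lemma sum_weights (B : Submodule (ZMod 2) (Fin 37 → ZMod 2)) (g : ℕ → ℤ) :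
    ∑ c ∈ words B, g (hammingNorm c) =
      ∑ w ∈ Finset.range 38, (weightCount (B : Set (Fin 37 → ZMod 2)) w : ℤ) * g w := by
  classical
  rw [← Finset.sum_fiberwise_of_maps_to (s := words B) (t := Finset.range 38)
    (g := fun c => hammingNorm c)]
  · refine Finset.sum_congr rfl fun w _ => ?_
    have : weightCount (B : Set (Fin 37 → ZMod 2)) w
        = ((words B).filter (fun c => hammingNorm c = w)).card := by
      unfold weightCount
      rw [← Set.ncard_coe_finset]
      congr 1; ext c; simp [mem_words]
    rw [this, Finset.sum_congr rfl (g := fun _ => g w)]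
    · simp
    · intro c hc; rw [(Finset.mem_filter.1 hc).2]
  · intro c _
    have := hammingNorm_le_card_fintype (x := c)
    simp at this ⊢; omega

/-- words of weight at most two are not orthogonal to the code -/
lemma dual_small {B : Submodule (ZMod 2) (Fin 37 → ZMod 2)}
    (hdual : HasMinWeight (dualCode B) 3) (s : Finset (Fin 37)) (hs : s.Nonempty)
    (h : ∀ c ∈ B, ∑ i ∈ s, c i = 0) : 3 ≤ s.card := by
  have hn : hammingNorm (fun i => if i ∈ s then (1 : ZMod 2) else 0) = s.card := by
    simp [hammingNorm]
  refine hdual.2 ⟨fun i => if i ∈ s then 1 else 0, ?_, ?_, hn⟩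
  · intro y hy; simpa [Finset.sum_ite_mem] using h y hy
  · intro h0
    obtain ⟨i, hi⟩ := hs
    have := congrFun h0 i
    simp [hi] at this

open Classical in
/-- supports of weight three dual words -/
def trip (B : Submodule (ZMod 2) (Fin 37 → ZMod 2)) : Finset (Finset (Fin 37)) :=
  Finset.univ.filter (fun s => s.card = 3 ∧ ∀ c ∈ B, ∑ i ∈ s, c i = 0)

lemma card_trip (B : Submodule (ZMod 2) (Fin 37 → ZMod 2)) :
    weightCount (dualCode B) 3 = (trip B).card := by
  classical
  unfold weightCount
  rw [← Set.ncard_coe_finset]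
  refine Set.ncard_congr (fun x _ => Finset.univ.filter (fun i => x i ≠ 0)) ?_ ?_ ?_
  · rintro x ⟨hx, hw⟩
    simp only [trip, Finset.coe_filter, Set.mem_ofPred_eq, Finset.mem_univ, true_and]
    refine ⟨hw, fun c hc => ?_⟩
    refine Eq.trans ?_ (hx c hc)
    rw [Finset.sum_filter]
    refine Finset.sum_congr rfl fun i _ => ?_
    generalize x i = a
    generalize c i = b
    revert a b; decide
  · intro x y _ _ h
    ext i
    have := Finset.ext_iff.1 h i
    simp only [Finset.mem_filter, Finset.mem_univ, true_and] at this
    generalize x i = a at *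
    generalize y i = b at *
    revert a b; decide
  · intro s hs
    simp only [trip, Finset.coe_filter, Set.mem_ofPred_eq, Finset.mem_univ, true_and] at hs
    refine ⟨fun i => if i ∈ s then 1 else 0, ⟨?_, ?_⟩, ?_⟩
    · intro y hy; simpa [Finset.sum_ite_mem] using hs.2 y hy
    · simp [hammingNorm, hs.1]
    · ext i; simp

open Classical in
lemma card_tuples {B : Submodule (ZMod 2) (Fin 37 → ZMod 2)}
    (hdual : HasMinWeight (dualCode B) 3) :
    (Finset.univ.filter (fun p : Fin 37 × Fin 37 × Fin 37 =>
      ∀ c ∈ B, c p.1 + c p.2.1 + c p.2.2 = 0)).card = 6 * (trip B).card := by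
  have h2 : ∀ a : ZMod 2, a + a = 0 := by decide
  have h1 : ∀ i : Fin 37, ¬ ∀ c ∈ B, c i = 0 := by
    intro i h
    have := dual_small hdual {i} (by simp) (by simpa using h)
    simp at this
  have hne : ∀ i j l : Fin 37, (∀ c ∈ B, c i + c j + c l = 0) → i ≠ j ∧ i ≠ l ∧ j ≠ l := by
    intro i j l h
    refine ⟨?_, ?_, ?_⟩ <;> rintro rfl
    · exact h1 l fun c hc => by simpa [h2] using h c hc
    · exact h1 j fun c hc => by have := h c hc; rwa [add_right_comm, h2, zero_add] at this
    · exact h1 i fun c hc => by have := h c hc; rwa [add_assoc, h2, add_zero] at this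
  rw [mul_comm]
  rw [Finset.card_eq_sum_card_fiberwise (t := trip B)
    (f := fun p : Fin 37 × Fin 37 × Fin 37 => ({p.1, p.2.1, p.2.2} : Finset (Fin 37)))]
  · rw [Finset.sum_const_nat]
    intro s hs
    simp only [trip, Finset.mem_filter, Finset.mem_univ, true_and] at hs
    obtain ⟨hc, hs⟩ := hs
    obtain ⟨x, y, z, hxy, hxz, hyz, rfl⟩ := Finset.card_eq_three.1 hc
    have : (Finset.filter (fun p : Fin 37 × Fin 37 × Fin 37 =>
        ({p.1, p.2.1, p.2.2} : Finset (Fin 37)) = {x, y, z})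
        (Finset.univ.filter (fun p : Fin 37 × Fin 37 × Fin 37 =>
      ∀ c ∈ B, c p.1 + c p.2.1 + c p.2.2 = 0))) =
      {(x, y, z), (x, z, y), (y, x, z), (y, z, x), (z, x, y), (z, y, x)} := by
      ext ⟨i, j, l⟩
      simp only [Finset.mem_filter, Finset.mem_univ, true_and, Finset.mem_insert,
        Finset.mem_singleton, Prod.mk.injEq]
      constructor
      · rintro ⟨hp, he⟩
        obtain ⟨a, b, d⟩ := hne i j l hp
        have e := Finset.ext_iff.1 he
        simp only [Finset.mem_insert, Finset.mem_singleton] at e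
        have ei := e i
        have ej := e j
        have el := e l
        simp only [true_or, or_true, true_iff] at ei ej el
        clear e he hp hs hne h1
        grind
      · intro h
        have hs' : ∀ c ∈ B, c x + c y + c z = 0 := by
          intro c hcB
          have := hs c hcB
          rw [Finset.sum_insert (by simp [hxy, hxz]), Finset.sum_insert (by simp [hyz]),
            Finset.sum_singleton] at this
          rw [← this]; ring
        constructor
        · intro c hcB
          rw [← hs' c hcB]
          rcases h with h | h | h | h | h | h <;> obtain ⟨rfl, rfl, rfl⟩ := h <;> ring
        · ext t
          simp only [Finset.mem_insert, Finset.mem_singleton]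
          rcases h with h | h | h | h | h | h <;> obtain ⟨rfl, rfl, rfl⟩ := h <;> tauto
    rw [this]
    have := hxy.symm
    have := hxz.symm
    have := hyz.symm
    repeat rw [Finset.card_insert_of_notMem (by simp [*])]
    simp
  · rintro ⟨i, j, l⟩ hp
    simp only [Finset.coe_filter, Set.mem_ofPred_eq, Finset.mem_univ, true_and] at hp
    obtain ⟨a, b, d⟩ := hne i j l hp
    simp only [trip, Finset.coe_filter, Set.mem_ofPred_eq, Finset.mem_univ, true_and]
    refine ⟨Finset.card_eq_three.2 ⟨i, j, l, a, b, d, rfl⟩, fun c hcB => ?_⟩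
    rw [Finset.sum_insert (by simp [a, b]), Finset.sum_insert (by simp [d]),
            Finset.sum_singleton, ← hp c hcB]
    ring

theorem weight_enumerator_37_6_12 {B : Submodule (ZMod 2) (Fin 37 → ZMod 2)}
    (hdim : Module.finrank (ZMod 2) B = 6)
    (hde : IsDoublyEven B)
    (hmin : HasMinWeight (B : Set (Fin 37 → ZMod 2)) 12)
    (hdual : HasMinWeight (dualCode B) 3) :
    (∀ w : ℕ, weightCount (B : Set (Fin 37 → ZMod 2)) w =
      if w = 0 then 1 else if w = 12 then 1 else if w = 16 then 17 else
        if w = 20 then 45 else 0) ∧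
      weightCount (dualCode B) 3 = 140 := by
  classical
  have h2 : ∀ a : ZMod 2, a + a = 0 := by decide
  -- the moments
  have m0 : ∑ c ∈ words B, (1 : ℤ) = 64 := by simp [card_words hdim]
  have m1 : ∑ c ∈ words B, (37 - 2 * (hammingNorm c : ℤ)) = 0 := by
    simp only [← sum_sg]
    rw [Finset.sum_comm]
    refine Finset.sum_eq_zero fun i _ => ?_
    rw [orth hdim (fun c => c i) (fun _ _ => rfl), if_neg]
    intro h
    have := dual_small hdual {i} (by simp) (by simpa using h)
    simp at this
  have m2 : ∑ c ∈ words B, (37 - 2 * (hammingNorm c : ℤ)) ^ 2 = 64 * 37 := by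
    simp only [← sum_sg, sq, Finset.sum_mul_sum, ← sg_add]
    rw [Finset.sum_comm]
    have : ∀ i : Fin 37, ∑ c ∈ words B, ∑ j, sg (c i + c j) = 64 := by
      intro i
      rw [Finset.sum_comm, Finset.sum_eq_single i]
      · rw [orth hdim (fun c => c i + c i) (fun _ _ => by simp only [Pi.add_apply]; ring), if_pos]
        intro c _; exact h2 _
      · intro j _ hj
        rw [orth hdim (fun c => c i + c j) (fun _ _ => by simp only [Pi.add_apply]; ring), if_neg]
        intro h
        have := dual_small hdual {i, j} (by simp)
          (by simpa [Finset.sum_pair hj.symm] using h)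
        have := Finset.card_le_two (a := i) (b := j)
        omega
      · simp
    simp [this]
  have m3 : ∑ c ∈ words B, (37 - 2 * (hammingNorm c : ℤ)) ^ 3
      = 64 * (6 * (weightCount (dualCode B) 3 : ℤ)) := by
    have e : ∀ c : Fin 37 → ZMod 2, (∑ i, sg (c i)) ^ 3
        = ∑ p : Fin 37 × Fin 37 × Fin 37, sg (c p.1 + c p.2.1 + c p.2.2) := by
      intro c
      simp only [Fintype.sum_prod_type, sg_add, pow_succ, pow_zero, one_mul,
        Finset.sum_mul, Finset.mul_sum]
      refine Finset.sum_congr rfl fun i _ => Finset.sum_congr rfl fun j _ =>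
        Finset.sum_congr rfl fun l _ => ?_
      ring
    simp only [← sum_sg, e]
    rw [Finset.sum_comm]
    have o : ∀ p : Fin 37 × Fin 37 × Fin 37,
        ∑ c ∈ words B, sg (c p.1 + c p.2.1 + c p.2.2) =
        64 * if ∀ c ∈ B, c p.1 + c p.2.1 + c p.2.2 = 0 then 1 else 0 := by
      intro p
      rw [orth hdim (fun c => c p.1 + c p.2.1 + c p.2.2)
        (fun _ _ => by simp only [Pi.add_apply]; ring)]
      simp
    simp only [o, ← Finset.mul_sum, Finset.sum_boole]
    rw [card_tuples hdual, card_trip]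
    push_cast; ring
  rw [sum_weights B (fun _ => 1)] at m0
  rw [sum_weights B (fun w => 37 - 2 * (w : ℤ))] at m1
  rw [sum_weights B (fun w => (37 - 2 * (w : ℤ)) ^ 2)] at m2
  rw [sum_weights B (fun w => (37 - 2 * (w : ℤ)) ^ 3)] at m3
  have a0 : weightCount (B : Set (Fin 37 → ZMod 2)) 0 = 1 := by
    unfold weightCount
    rw [Set.ncard_eq_one]
    refine ⟨0, ?_⟩
    ext c; simp only [SetLike.mem_coe, hammingNorm_eq_zero, Set.mem_ofPred_eq,
      Set.mem_singleton_iff]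
    constructor
    · exact fun h => h.2
    · rintro rfl; exact ⟨B.zero_mem, rfl⟩
  have az : ∀ w, w ≠ 0 → (¬ 4 ∣ w ∨ w < 12 ∨ 37 < w) →
      weightCount (B : Set (Fin 37 → ZMod 2)) w = 0 := by
    intro w hw0 hw
    unfold weightCount
    rw [Set.ncard_eq_zero]
    ext c
    simp only [Set.mem_ofPred_eq, Set.mem_empty_iff_false, iff_false]
    rintro ⟨hc, rfl⟩
    have k1 := hde c hc
    have k2 : 12 ≤ hammingNorm c := hmin.2 ⟨c, hc, hammingNorm_ne_zero_iff.1 hw0, rfl⟩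
    have k3 := hammingNorm_le_card_fintype (x := c)
    simp at k3
    omega
  have a12 : 1 ≤ weightCount (B : Set (Fin 37 → ZMod 2)) 12 := by
    obtain ⟨c, hc, _, hw⟩ := hmin.1
    unfold weightCount
    rw [Nat.one_le_iff_ne_zero, ← Nat.pos_iff_ne_zero, Set.ncard_pos]
    exact ⟨c, hc, hw⟩
  generalize weightCount (dualCode B) 3 = D at *
  generalize weightCount (B : Set (Fin 37 → ZMod 2)) = A at *
  have hr : ∀ g : ℕ → ℤ, ∑ w ∈ Finset.range 38, (A w : ℤ) * g w =
      g 0 + A 12 * g 12 + A 16 * g 16 + A 20 * g 20 + A 24 * g 24 + A 28 * g 28 + A 32 * g 32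
        + A 36 * g 36 := by
    intro g
    have : ∑ w ∈ Finset.range 38, (A w : ℤ) * g w =
        ∑ w ∈ ({0, 12, 16, 20, 24, 28, 32, 36} : Finset ℕ), (A w : ℤ) * g w := by
      symm
      apply Finset.sum_subset
      · decide
      · intro w hw hn
        simp only [Finset.mem_insert, Finset.mem_singleton, Finset.mem_range] at hw hn
        rw [az w (by omega) (by omega)]; simp
    rw [this]
    simp [a0]; ring
  rw [hr] at m0 m1 m2 m3
  norm_num at m0 m1 m2 m3
  have b : A 12 = 1 ∧ A 16 = 17 ∧ A 20 = 45 ∧ A 24 = 0 ∧ A 28 = 0 ∧ A 32 = 0 ∧ A 36 = 0 := by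
    omega
  obtain ⟨b1, b2, b3, b4, b5, b6, b7⟩ := b
  constructor
  · intro w
    split_ifs with c1 c2 c3 c4
    · rw [c1, a0]
    · rw [c2, b1]
    · rw [c3, b2]
    · rw [c4, b3]
    · by_cases hw : ¬ 4 ∣ w ∨ w < 12 ∨ 37 < w
      · exact az w c1 hw
      · have : w = 24 ∨ w = 28 ∨ w = 32 ∨ w = 36 := by omega
        rcases this with rfl | rfl | rfl | rfl <;> assumption
  · rw [b1, b2, b3, b4, b5, b6, b7] at m3
    norm_num at m3
    omega
end
end

section
/- Let C be a self-dual ℤ₄-code of length 37 such that the residue code C⁽¹⁾ is a binary doubly even [37,6,12] code and the torsion code C⁽²⁾ has minimum weight 3. Then A₄(C) is an (odd) unimodular lattice with min(A₄(C)) = 3 and kissing number at least 1120. -/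
open scoped RealInnerProductSpace

noncomputable section

/-- The dual of a `ℤ₄`-code: `C⊥ = {x ∈ ℤ₄ⁿ : x·y = 0 for all y ∈ C}`. -/
def dualZ4 {n : ℕ} (C : Submodule (ZMod 4) (Fin n → ZMod 4)) : Set (Fin n → ZMod 4) :=
  {x | ∀ y ∈ C, ∑ i, x i * y i = 0}

/-- Reduction modulo 2 of a `ℤ₄`-word. -/
def toBinary {n : ℕ} (c : Fin n → ZMod 4) : Fin n → ZMod 2 :=
  fun i => ZMod.castHom (by norm_num : (2 : ℕ) ∣ 4) (ZMod 2) (c i)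

/-- The residue code `C⁽¹⁾ = {c mod 2 : c ∈ C}`. -/
def residueCode {n : ℕ} (C : Submodule (ZMod 4) (Fin n → ZMod 4)) : Set (Fin n → ZMod 2) :=
  {b | ∃ c ∈ C, b = toBinary c}

/-- The torsion code `C⁽²⁾ = {c mod 2 : c ∈ ℤ₄ⁿ, 2c ∈ C}`. -/
def torsionCode {n : ℕ} (C : Submodule (ZMod 4) (Fin n → ZMod 4)) : Set (Fin n → ZMod 2) :=
  {b | ∃ c : Fin n → ZMod 4, (2 : ZMod 4) • c ∈ C ∧ b = toBinary c}

/-- Construction A: `A₄(C) = (1/2)·{x ∈ ℤⁿ : (x mod 4) ∈ C}`. -/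
def constructionA4 {n : ℕ} (C : Submodule (ZMod 4) (Fin n → ZMod 4)) :
    Set (EuclideanSpace ℝ (Fin n)) :=
  {v | ∃ x : Fin n → ℤ, (fun i => (x i : ZMod 4)) ∈ C ∧ ∀ i, v i = (x i : ℝ) / 2}

/-- The additive sign character of `ZMod 2`. -/
def sgn2 (a : ZMod 2) : ℤ := if a = 0 then 1 else -1

theorem sgn2_add (a b : ZMod 2) : sgn2 (a + b) = sgn2 a * sgn2 b := by
  revert a b; decide

theorem sgn2_zero : sgn2 0 = 1 := rfl

theorem sgn2_one : sgn2 1 = -1 := by decide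

/-- Orthogonality: a nonzero linear functional on a finite space is balanced. -/
theorem sum_sgn2 {V : Type*} [AddCommGroup V] [Module (ZMod 2) V] [Fintype V]
    (φ : V →ₗ[ZMod 2] ZMod 2) [Decidable (φ = 0)] :
    ∑ c, sgn2 (φ c) = if φ = 0 then (Fintype.card V : ℤ) else 0 := by
  split_ifs with h
  · subst h
    simp [sgn2_zero]
  · obtain ⟨d, hd⟩ : ∃ d, φ d ≠ 0 := by
      by_contra hh
      push Not at hh
      exact h (LinearMap.ext hh)
    have hd1 : φ d = 1 := by
      revert hd
      generalize φ d = a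
      revert a; decide
    have h1 : ∑ c, sgn2 (φ c) = ∑ c, sgn2 (φ (c + d)) :=
      (Equiv.sum_comp (Equiv.addRight d) (fun c => sgn2 (φ c))).symm
    have h2 : ∑ c, sgn2 (φ (c + d)) = - ∑ c, sgn2 (φ c) := by
      rw [← Finset.sum_neg_distrib]
      refine Finset.sum_congr rfl fun c _ => ?_
      rw [map_add, sgn2_add, hd1, sgn2_one]; ring
    linarith

theorem sum_sgn2_eq {n : ℕ} (c : Fin n → ZMod 2) :
    ∑ i, sgn2 (c i) = (n : ℤ) - 2 * (hammingNorm c : ℤ) := by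
  have h : ∀ i, sgn2 (c i) = 1 - 2 * (if c i ≠ 0 then 1 else 0) := by
    intro i
    unfold sgn2
    split_ifs <;> simp_all
  have h2 : (hammingNorm c : ℤ) = ∑ i, (if c i ≠ 0 then 1 else 0) := by
    unfold hammingNorm
    rw [Finset.card_filter]
    push_cast
    rfl
  simp only [h, Finset.sum_sub_distrib, ← Finset.mul_sum]
  rw [h2]
  simp

/-- A lattice vector is a half-integral vector. -/
theorem inner_eq_sum {n : ℕ} (x y : EuclideanSpace ℝ (Fin n)) :
    ⟪x, y⟫ = ∑ i, x i * y i := by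
  simp [PiLp.inner_apply, mul_comm]

theorem normOf_eq_sum {n : ℕ} (x : EuclideanSpace ℝ (Fin n)) :
    normOf x = ∑ i, x i * x i := inner_eq_sum x x

theorem normOf_half {n : ℕ} (v : EuclideanSpace ℝ (Fin n)) (x : Fin n → ℤ)
    (h : ∀ i, v i = (x i : ℝ) / 2) : normOf v = ((∑ i, x i ^ 2 : ℤ) : ℝ) / 4 := by
  rw [normOf_eq_sum]
  push_cast
  rw [Finset.sum_div]
  refine Finset.sum_congr rfl fun i _ => ?_
  rw [h]; ring

theorem constructionA4_unimodular {n : ℕ} {C : Submodule (ZMod 4) (Fin n → ZMod 4)}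
    (hsd : (C : Set (Fin n → ZMod 4)) = dualZ4 C) :
    IsUnimodularLattice (constructionA4 C) := by
  unfold IsUnimodularLattice
  apply Set.Subset.antisymm
  · rintro v ⟨x, hx, hv⟩ w ⟨y, hy, hw⟩
    have hx' : (fun i => (x i : ZMod 4)) ∈ dualZ4 C := hsd ▸ hx
    have h0 := hx' _ hy
    have h1 : ((∑ i, x i * y i : ℤ) : ZMod 4) = 0 := by
      push_cast; exact h0
    obtain ⟨m, hm⟩ := (ZMod.intCast_zmod_eq_zero_iff_dvd _ 4).1 h1
    refine ⟨m, ?_⟩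
    rw [inner_eq_sum]
    have h2 : ((∑ i, x i * y i : ℤ) : ℝ) = 4 * m := by
      rw [hm]; push_cast; ring
    have h3 : ∑ i, v i * w i = ((∑ i, x i * y i : ℤ) : ℝ) / 4 := by
      push_cast
      rw [Finset.sum_div]
      refine Finset.sum_congr rfl fun i _ => ?_
      rw [hv, hw]; ring
    rw [h3, h2]; ring
  · intro v hv
    have hint : ∀ i, ∃ m : ℤ, v i = (m : ℝ) / 2 := by
      intro i
      obtain ⟨m, hm⟩ := hv (WithLp.toLp 2 (fun j => if j = i then 2 else 0))
        ⟨fun j => if j = i then 4 else 0, by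
          have : (fun j => (((if j = i then 4 else 0 : ℤ)) : ZMod 4)) = 0 := by
            funext j
            split_ifs
            · exact (by decide : ((4 : ℤ) : ZMod 4) = 0)
            · simp
          rw [this]; exact C.zero_mem, by
          intro j
          by_cases h : j = i <;> simp [h]; norm_num⟩
      refine ⟨m, ?_⟩
      rw [inner_eq_sum] at hm
      simp at hm
      linarith
    choose x hx using hint
    refine ⟨x, ?_, hx⟩
    have key : (fun i => (x i : ZMod 4)) ∈ dualZ4 C := by
      intro c hc
      obtain ⟨m, hm⟩ := hv (WithLp.toLp 2 (fun j => (((c j).cast : ℤ) : ℝ) / 2))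
        ⟨fun j => ((c j).cast : ℤ), by simpa using hc, fun i => rfl⟩
      rw [inner_eq_sum] at hm
      have h3 : ((∑ i, x i * ((c i).cast : ℤ) : ℤ) : ℝ) = ((4 * m : ℤ) : ℝ) := by
        push_cast
        rw [← hm, Finset.mul_sum]
        refine Finset.sum_congr rfl fun i _ => ?_
        rw [hx]; simp only []; ring
      have h4 : ∑ i, x i * ((c i).cast : ℤ) = 4 * m := by exact_mod_cast h3
      have h5 := congrArg (Int.cast : ℤ → ZMod 4) h4
      push_cast at h5
      rw [(by decide : (4 : ZMod 4) = 0), zero_mul] at h5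
      simpa using h5
    have : (fun i => (x i : ZMod 4)) ∈ (C : Set (Fin n → ZMod 4)) := hsd ▸ key
    exact this

theorem toBinary_intCast {n : ℕ} (x : Fin n → ℤ) :
    toBinary (fun i => (x i : ZMod 4)) = fun i => (x i : ZMod 2) := by
  funext i
  simp [toBinary]

/-- Twice an integral word orthogonal mod 2 to the residue code lies in the code. -/
theorem two_mul_mem {n : ℕ} {C : Submodule (ZMod 4) (Fin n → ZMod 4)}
    (hsd : (C : Set (Fin n → ZMod 4)) = dualZ4 C) (x : Fin n → ℤ)
    (h : ∀ b ∈ residueCode C, ∑ i, (x i : ZMod 2) * b i = 0) :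
    (fun i => ((2 * x i : ℤ) : ZMod 4)) ∈ C := by
  have key : (fun i => ((2 * x i : ℤ) : ZMod 4)) ∈ dualZ4 C := by
    intro c hc
    have h1 := h _ ⟨c, hc, rfl⟩
    have hc' : c = fun i => (((c i).cast : ℤ) : ZMod 4) := by funext i; simp
    rw [hc', toBinary_intCast] at h1
    have h2 : ((∑ i, x i * ((c i).cast : ℤ) : ℤ) : ZMod 2) = 0 := by
      push_cast; push_cast at h1; exact h1
    obtain ⟨m, hm⟩ := (ZMod.intCast_zmod_eq_zero_iff_dvd _ 2).1 h2
    have h4 : ∑ i, (2 * x i) * ((c i).cast : ℤ) = 4 * m := by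
      simp only [mul_assoc, ← Finset.mul_sum]
      rw [hm]; push_cast; ring
    have h5 := congrArg (Int.cast : ℤ → ZMod 4) h4
    push_cast at h5
    rw [(by decide : (4 : ZMod 4) = 0), zero_mul] at h5
    push_cast
    simpa using h5
  have : (fun i => ((2 * x i : ℤ) : ZMod 4)) ∈ (C : Set (Fin n → ZMod 4)) := hsd ▸ key
  exact this

theorem torsion_of_two_mul {n : ℕ} {C : Submodule (ZMod 4) (Fin n → ZMod 4)} (x : Fin n → ℤ)
    (h : (fun i => ((2 * x i : ℤ) : ZMod 4)) ∈ C) :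
    (fun i => (x i : ZMod 2)) ∈ torsionCode C := by
  refine ⟨fun i => (x i : ZMod 4), ?_, (toBinary_intCast x).symm⟩
  convert h using 1
  funext i
  simp

/-- A sum of squares bounds the number of entries that are nonzero mod 2. -/
theorem hammingNorm_le_sum_sq {n : ℕ} (x : Fin n → ℤ) :
    (hammingNorm (fun i => (x i : ZMod 2)) : ℤ) ≤ ∑ i, x i ^ 2 := by
  have h : (hammingNorm (fun i => (x i : ZMod 2)) : ℤ)
      = ∑ i, (if (x i : ZMod 2) ≠ 0 then 1 else 0) := by
    unfold hammingNorm
    rw [Finset.card_filter]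
    push_cast
    rfl
  rw [h]
  refine Finset.sum_le_sum fun i _ => ?_
  split_ifs with h
  · have : x i ≠ 0 := by rintro h0; simp [h0] at h
    have := sq_pos_of_ne_zero this
    linarith
  · positivity

theorem constructionA4_norm_ge {n : ℕ} {C : Submodule (ZMod 4) (Fin n → ZMod 4)}
    (hB : ∀ b ∈ residueCode C, b ≠ 0 → 12 ≤ hammingNorm b)
    (hT : ∀ b ∈ torsionCode C, b ≠ 0 → 3 ≤ hammingNorm b)
    (v : EuclideanSpace ℝ (Fin n)) (hv : v ∈ constructionA4 C) (h0 : v ≠ 0) :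
    3 ≤ normOf v := by
  obtain ⟨x, hx, hvx⟩ := hv
  rw [normOf_half v x hvx]
  suffices h : (12 : ℤ) ≤ ∑ i, x i ^ 2 by
    have : ((12 : ℤ) : ℝ) ≤ ((∑ i, x i ^ 2 : ℤ) : ℝ) := by exact_mod_cast h
    push_cast at this ⊢
    linarith
  by_cases h1 : (fun i => (x i : ZMod 2)) = 0
  · have hev : ∀ i, ∃ y : ℤ, x i = 2 * y := fun i =>
      (ZMod.intCast_zmod_eq_zero_iff_dvd _ 2).1 (congrFun h1 i)
    choose y hy using hev
    have hs : ∑ i, x i ^ 2 = 4 * ∑ i, y i ^ 2 := by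
      rw [Finset.mul_sum]
      refine Finset.sum_congr rfl fun i _ => ?_
      rw [hy]; ring
    rw [hs]
    suffices (3 : ℤ) ≤ ∑ i, y i ^ 2 by linarith
    by_cases h2 : (fun i => (y i : ZMod 2)) = 0
    · have hex : ∃ i, y i ≠ 0 := by
        by_contra hh
        push Not at hh
        apply h0
        ext i
        rw [hvx, hy, hh]; simp
      obtain ⟨i, hi⟩ := hex
      obtain ⟨z, hz⟩ := (ZMod.intCast_zmod_eq_zero_iff_dvd _ 2).1 (congrFun h2 i)
      have hz0 : z ≠ 0 := by rintro rfl; simp at hz; exact hi hz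
      have := sq_pos_of_ne_zero hz0
      have h3 : y i ^ 2 ≤ ∑ i, y i ^ 2 :=
        Finset.single_le_sum (f := fun i => y i ^ 2) (fun j _ => sq_nonneg _) (Finset.mem_univ i)
      rw [hz] at h3
      push_cast at h3
      nlinarith
    · have h3 := hT _ (torsion_of_two_mul y (by simpa only [hy] using hx)) h2
      have h4 := hammingNorm_le_sum_sq y
      have : (3 : ℤ) ≤ hammingNorm (fun i => (y i : ZMod 2)) := by exact_mod_cast h3
      linarith
  · have h3 := hB _ ⟨_, hx, (toBinary_intCast x).symm⟩ h1
    have h4 := hammingNorm_le_sum_sq x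
    have : (12 : ℤ) ≤ hammingNorm (fun i => (x i : ZMod 2)) := by exact_mod_cast h3
    linarith

theorem finite_norm {n : ℕ} (C : Submodule (ZMod 4) (Fin n → ZMod 4)) (r : ℕ) :
    {x ∈ constructionA4 C | normOf x = r}.Finite := by
  refine Set.Finite.subset ((Set.finite_Icc (fun _ : Fin n => -(4 * r : ℤ))
    (fun _ => (4 * r : ℤ))).image
    (fun x : Fin n → ℤ => (WithLp.toLp 2 (fun i => (x i : ℝ) / 2) : EuclideanSpace ℝ (Fin n)))) ?_
  rintro v ⟨⟨x, _, hvx⟩, hn⟩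
  rw [normOf_half v x hvx] at hn
  have h : ((∑ i, x i ^ 2 : ℤ) : ℝ) = ((4 * r : ℤ) : ℝ) := by push_cast at hn ⊢; linarith
  have h : ∑ i, x i ^ 2 = (4 * r : ℤ) := by exact_mod_cast h
  have hb : ∀ i, |x i| ≤ 4 * r := by
    intro i
    have h3 : x i ^ 2 ≤ ∑ i, x i ^ 2 :=
        Finset.single_le_sum (f := fun i => x i ^ 2) (fun j _ => sq_nonneg _) (Finset.mem_univ i)
    have h4 : |x i| ≤ x i ^ 2 := by
      rw [← sq_abs]
      exact Int.le_self_sq |x i|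
    linarith
  refine ⟨x, ⟨fun i => (abs_le.1 (hb i)).1, fun i => (abs_le.1 (hb i)).2⟩, ?_⟩
  ext i
  exact (hvx i).symm

/-- The `i`-th coordinate functional on a binary code. -/
def coordF {n : ℕ} (B : Submodule (ZMod 2) (Fin n → ZMod 2)) (i : Fin n) : B →ₗ[ZMod 2] ZMod 2 :=
  (LinearMap.proj i).comp B.subtype

theorem coordF_apply {n : ℕ} (B : Submodule (ZMod 2) (Fin n → ZMod 2)) (i : Fin n) (c : B) :
    coordF B i c = (c : Fin n → ZMod 2) i := rfl

/-- Power moments of a binary code with trivial dual words of weight one and two. -/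
theorem moments {n : ℕ} (B : Submodule (ZMod 2) (Fin n → ZMod 2)) [Fintype B]
    [DecidableEq (B →ₗ[ZMod 2] ZMod 2)]
    (h1 : ∀ i, coordF B i ≠ 0) (h2 : ∀ i j, i ≠ j → coordF B i + coordF B j ≠ 0) :
    (∑ c : B, ∑ i, sgn2 ((c : Fin n → ZMod 2) i) = 0) ∧
    (∑ c : B, (∑ i, sgn2 ((c : Fin n → ZMod 2) i)) ^ 2 = n * Fintype.card B) ∧
    (∑ c : B, (∑ i, sgn2 ((c : Fin n → ZMod 2) i)) ^ 3 =
      Fintype.card B * (Finset.univ.filter (fun p : Fin n × Fin n × Fin n =>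
        coordF B p.1 + coordF B p.2.1 + coordF B p.2.2 = 0)).card) := by
  refine ⟨?_, ?_, ?_⟩
  · rw [Finset.sum_comm]
    refine Finset.sum_eq_zero fun i _ => ?_
    have := sum_sgn2 (coordF B i)
    rw [if_neg (h1 i)] at this
    exact this
  · have e : ∀ c : B, (∑ i, sgn2 ((c : Fin n → ZMod 2) i)) ^ 2
        = ∑ i, ∑ j, sgn2 ((coordF B i + coordF B j) c) := by
      intro c
      rw [sq, Finset.sum_mul_sum]
      simp only [LinearMap.add_apply, sgn2_add, coordF_apply]
    simp only [e]
    rw [Finset.sum_comm]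
    have : ∀ i, ∑ c : B, ∑ j, sgn2 ((coordF B i + coordF B j) c) = (Fintype.card B : ℤ) := by
      intro i
      rw [Finset.sum_comm, Finset.sum_eq_single i]
      · rw [sum_sgn2, if_pos]
        ext c
        exact CharTwo.add_self_eq_zero _
      · intro j _ hj
        rw [sum_sgn2, if_neg (h2 i j hj.symm)]
      · simp
    rw [Finset.sum_congr rfl fun i _ => this i]
    simp
  · have e : ∀ c : B, (∑ i, sgn2 ((c : Fin n → ZMod 2) i)) ^ 3
        = ∑ p : Fin n × Fin n × Fin n,
          sgn2 ((coordF B p.1 + coordF B p.2.1 + coordF B p.2.2) c) := by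
      intro c
      rw [pow_succ, sq, Finset.sum_mul_sum, Fintype.sum_prod_type, Finset.sum_mul]
      refine Finset.sum_congr rfl fun i _ => ?_
      rw [Finset.sum_mul, Fintype.sum_prod_type]
      refine Finset.sum_congr rfl fun j _ => ?_
      rw [Finset.mul_sum]
      simp only [LinearMap.add_apply, sgn2_add, coordF_apply]
    simp only [e]
    rw [Finset.sum_comm]
    simp only [sum_sgn2]
    rw [Finset.sum_ite]
    simp [mul_comm]

/-- The number of ordered triples giving dual words is at least 840. -/
theorem triple_count (B : Submodule (ZMod 2) (Fin 37 → ZMod 2))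
    [DecidableEq (B →ₗ[ZMod 2] ZMod 2)]
    (h1 : ∀ i, coordF B i ≠ 0) (h2 : ∀ i j, i ≠ j → coordF B i + coordF B j ≠ 0)
    (hdim : Module.finrank (ZMod 2) B = 6) (hde : IsDoublyEven B)
    (hmin : HasMinWeight (B : Set (Fin 37 → ZMod 2)) 12) :
    (Finset.univ.filter (fun p : Fin 37 × Fin 37 × Fin 37 =>
        coordF B p.1 + coordF B p.2.1 + coordF B p.2.2 = 0)).card = 840 := by
  classical
  have : Fintype B := Fintype.ofFinite B
  have hcard : Fintype.card B = 64 := by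
    rw [Module.card_eq_pow_finrank (K := ZMod 2), hdim, ZMod.card]; norm_num
  obtain ⟨m1, m2, m3⟩ := moments B h1 h2
  rw [hcard] at m2 m3
  set m : B → ℤ := fun c => ∑ i, sgn2 ((c : Fin 37 → ZMod 2) i) with hm
  change ∑ c, m c = 0 at m1
  change ∑ c, m c ^ 2 = _ at m2
  change ∑ c, m c ^ 3 = _ at m3
  have hw : ∀ c : B, ∃ k : ℤ, m c = 5 - 8 * k := by
    intro c
    obtain ⟨k, hk⟩ := hde c c.2
    refine ⟨k - 4, ?_⟩
    have := sum_sgn2_eq (c : Fin 37 → ZMod 2)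
    rw [hk] at this
    push_cast at this
    change m c = _ at this
    linarith
  obtain ⟨⟨b, hbB, hb0, hb12⟩, -⟩ := hmin
  let b' : B := ⟨b, hbB⟩
  have hb' : m b' = 13 := by
    have := sum_sgn2_eq b
    rw [hb12] at this
    change m b' = _ at this
    rw [this]; norm_num
  have h0' : m 0 = 37 := by
    simp [hm, sgn2_zero]
  have hbne : b' ≠ 0 := fun h => hb0 (congrArg Subtype.val h)
  have hf : ∀ c, 0 ≤ (m c - 5) * (m c + 3) := by
    intro c
    obtain ⟨k, hk⟩ := hw c
    rw [hk]
    have : 0 ≤ k * (k - 1) := by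
      rcases le_or_gt k 0 with h | h
      · nlinarith
      · nlinarith
    nlinarith
  have hsum : ∑ c, (m c - 5) * (m c + 3) = 1408 := by
    have : ∀ c, (m c - 5) * (m c + 3) = m c ^ 2 - 2 * m c - 15 := fun c => by ring
    simp only [this, Finset.sum_sub_distrib, ← Finset.mul_sum, m1, m2]
    simp [hcard]
  have hz : ∀ c, c ≠ 0 → c ≠ b' → (m c - 5) * (m c + 3) = 0 := by
    intro c hc hcb
    have hs : ∑ x ∈ ({0, b', c} : Finset B), (m x - 5) * (m x + 3) ≤ 1408 := by
      rw [← hsum]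
      exact Finset.sum_le_sum_of_subset_of_nonneg (Finset.subset_univ _) (fun i _ _ => hf i)
    rw [Finset.sum_insert (by simp [hbne.symm, hc.symm]),
      Finset.sum_insert (by simp [hcb.symm]), Finset.sum_singleton, h0', hb'] at hs
    have := hf c
    linarith
  have hg : ∑ c, (m c - 5) * (m c + 3) * (m c - 13) = 30720 := by
    rw [Finset.sum_eq_single 0]
    · rw [h0']; norm_num
    · intro c _ hc
      by_cases hcb : c = b'
      · rw [hcb, hb']; norm_num
      · rw [hz c hc hcb, zero_mul]
    · simp
  have : ∀ c, (m c - 5) * (m c + 3) * (m c - 13) = m c ^ 3 - 15 * m c ^ 2 + 11 * m c + 195 :=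
    fun c => by ring
  simp only [this, Finset.sum_sub_distrib, Finset.sum_add_distrib, ← Finset.mul_sum, m1, m2, m3]
    at hg
  simp [hcard] at hg
  omega

/-- The integer vector with entries `a, b, c` in positions `i, j, k`. -/
def triVec {n : ℕ} (p : (Fin n × Fin n × Fin n) × (ℤ × ℤ × ℤ)) : Fin n → ℤ :=
  Pi.single p.1.1 p.2.1 + Pi.single p.1.2.1 p.2.2.1 + Pi.single p.1.2.2 p.2.2.2

/-- The six reorderings of a triple. -/
def perms {n : ℕ} (q : Fin n × Fin n × Fin n) : Finset (Fin n × Fin n × Fin n) :=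
  {(q.1, q.2.1, q.2.2), (q.1, q.2.2, q.2.1), (q.2.1, q.1, q.2.2), (q.2.1, q.2.2, q.1),
    (q.2.2, q.1, q.2.1), (q.2.2, q.2.1, q.1)}

theorem perms_card {n : ℕ} (q : Fin n × Fin n × Fin n) : (perms q).card ≤ 6 :=
  Finset.card_le_six

theorem triVec_apply {n : ℕ} (i j k : Fin n) (a b c : ℤ) (hij : i ≠ j) (hik : i ≠ k)
    (hjk : j ≠ k) (l : Fin n) : triVec ((i, j, k), (a, b, c)) l =
      if l = i then a else if l = j then b else if l = k then c else 0 := by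
  unfold triVec
  simp only [Pi.add_apply, Pi.single_apply]
  split_ifs <;> simp_all

theorem sum_triVec_sq {n : ℕ} (i j k : Fin n) (a b c : ℤ) (hij : i ≠ j) (hik : i ≠ k)
    (hjk : j ≠ k) : ∑ l, triVec ((i, j, k), (a, b, c)) l ^ 2 = a ^ 2 + b ^ 2 + c ^ 2 := by
  have : ∀ l, triVec ((i, j, k), (a, b, c)) l ^ 2 =
      (if l = i then a ^ 2 else 0) + (if l = j then b ^ 2 else 0)
        + (if l = k then c ^ 2 else 0) := by
    intro l
    rw [triVec_apply i j k a b c hij hik hjk]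
    split_ifs <;> simp_all
  simp [this, Finset.sum_add_distrib]

/-- Lower bound for the number of distinct vectors obtained from ordered triples with signs. -/
theorem card_triVec {n : ℕ} (T : Finset (Fin n × Fin n × Fin n))
    (hT : ∀ p ∈ T, p.1 ≠ p.2.1 ∧ p.1 ≠ p.2.2 ∧ p.2.1 ≠ p.2.2) :
    8 * T.card ≤ 6 * ((T ×ˢ (({1, -1} : Finset ℤ) ×ˢ ({1, -1} : Finset ℤ) ×ˢ
      ({1, -1} : Finset ℤ))).image triVec).card := by
  have h8 : (T ×ˢ (({1, -1} : Finset ℤ) ×ˢ ({1, -1} : Finset ℤ) ×ˢ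
      ({1, -1} : Finset ℤ))).card = 8 * T.card := by
    rw [Finset.card_product, mul_comm]; rfl
  rw [← h8]
  refine Finset.card_le_mul_card_image _ 6 ?_
  intro v hv
  obtain ⟨⟨⟨i, j, k⟩, a, b, c⟩, hp, rfl⟩ := Finset.mem_image.1 hv
  rw [Finset.mem_product] at hp
  obtain ⟨hij, hik, hjk⟩ := hT _ hp.1
  simp only [] at hij hik hjk
  set v := triVec ((i, j, k), (a, b, c)) with hvdef
  have hsupp : ∀ l, v l ≠ 0 → l = i ∨ l = j ∨ l = k := by
    intro l hl
    rw [hvdef, triVec_apply i j k a b c hij hik hjk] at hl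
    by_contra hh
    push Not at hh
    simp [hh.1, hh.2.1, hh.2.2] at hl
  refine le_trans (Finset.card_le_card (t := (perms (i, j, k)).image
    (fun q => (q, (v q.1, v q.2.1, v q.2.2)))) ?_) (Finset.card_image_le.trans (perms_card _))
  rintro ⟨⟨i', j', k'⟩, a', b', c'⟩ hq
  rw [Finset.mem_filter, Finset.mem_product] at hq
  obtain ⟨⟨hq1, hq2⟩, hqv⟩ := hq
  obtain ⟨hij', hik', hjk'⟩ := hT _ hq1
  simp only [] at hij' hik' hjk' hq2
  simp only [Finset.mem_product, Finset.mem_insert, Finset.mem_singleton] at hq2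
  have happ := triVec_apply i' j' k' a' b' c' hij' hik' hjk'
  rw [hqv] at happ
  have ei : v i' = a' := by rw [happ]; simp
  have ej : v j' = b' := by rw [happ]; simp [hij'.symm]
  have ek : v k' = c' := by rw [happ]; simp [hik'.symm, hjk'.symm]
  have ni := hsupp i' (by rw [ei]; rcases hq2.1 with h | h <;> rw [h] <;> norm_num)
  have nj := hsupp j' (by rw [ej]; rcases hq2.2.1 with h | h <;> rw [h] <;> norm_num)
  have nk := hsupp k' (by rw [ek]; rcases hq2.2.2 with h | h <;> rw [h] <;> norm_num)
  rw [Finset.mem_image]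
  refine ⟨(i', j', k'), ?_, by simp only [ei, ej, ek]⟩
  clear happ hqv ei ej ek hq1 hq2 hsupp hp hv hvdef h8
  clear v
  unfold perms
  simp only [Finset.mem_insert, Finset.mem_singleton, Prod.mk.injEq]
  rcases ni with rfl | rfl | rfl <;> rcases nj with rfl | rfl | rfl <;>
    rcases nk with rfl | rfl | rfl <;> simp_all

set_option linter.constructorNameAsVariable false

theorem constructionA4_length37 {C : Submodule (ZMod 4) (Fin 37 → ZMod 4)}
    (hsd : (C : Set (Fin 37 → ZMod 4)) = dualZ4 C)
    (hres : ∃ B : Submodule (ZMod 2) (Fin 37 → ZMod 2),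
      (B : Set (Fin 37 → ZMod 2)) = residueCode C ∧
      Module.finrank (ZMod 2) B = 6 ∧ IsDoublyEven B ∧
      HasMinWeight (B : Set (Fin 37 → ZMod 2)) 12)
    (htor : HasMinWeight (torsionCode C) 3) :
    IsUnimodularLattice (constructionA4 C) ∧ IsOddLattice (constructionA4 C) ∧
      HasMinNorm (constructionA4 C) 3 ∧ 1120 ≤ numVecsOfNorm (constructionA4 C) 3 := by
  classical
  obtain ⟨B, hBC, hdim, hde, hmin⟩ := hres
  have hB : ∀ b ∈ residueCode C, b ≠ 0 → 12 ≤ hammingNorm b := by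
    intro b hb hb0
    rw [← hBC] at hb
    exact hmin.2 ⟨b, hb, hb0, rfl⟩
  have hT : ∀ b ∈ torsionCode C, b ≠ 0 → 3 ≤ hammingNorm b := fun b hb hb0 =>
    htor.2 ⟨b, hb, hb0, rfl⟩
  have huni := constructionA4_unimodular hsd
  have hge := constructionA4_norm_ge hB hT
  -- integral words of weight at most three that are orthogonal to the residue code
  have hsingle : ∀ (i : Fin 37) (a : ℤ) (y : Fin 37 → ZMod 2),
      ∑ l, ((Pi.single i a : Fin 37 → ℤ) l : ZMod 2) * y l = (a : ZMod 2) * y i := by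
    intro i a y
    rw [Finset.sum_eq_single i]
    · simp
    · intro l _ hl
      simp [Pi.single_apply, hl]
    · simp
  have hsmall : ∀ x : Fin 37 → ℤ, (∀ y ∈ B, ∑ i, (x i : ZMod 2) * y i = 0) →
      ∑ i, x i ^ 2 < 3 → (fun i => (x i : ZMod 2)) = 0 := by
    intro x hx hlt
    by_contra hne
    have h1 := two_mul_mem hsd x (by rw [← hBC]; exact hx)
    have h2 := hT _ (torsion_of_two_mul x h1) hne
    have h3 := hammingNorm_le_sum_sq x
    have : (3 : ℤ) ≤ hammingNorm (fun i => (x i : ZMod 2)) := by exact_mod_cast h2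
    linarith
  have h1 : ∀ i, coordF B i ≠ 0 := by
    intro i hi
    have := hsmall (Pi.single i 1) (by
      intro y hy
      rw [hsingle]
      have := LinearMap.congr_fun hi ⟨y, hy⟩
      simpa [coordF_apply] using this) (by
      simp [Pi.single_apply, ite_pow])
    have := congrFun this i
    simp at this
  have h2 : ∀ i j, i ≠ j → coordF B i + coordF B j ≠ 0 := by
    intro i j hij hi
    have := hsmall (Pi.single i 1 + Pi.single j 1) (by
      intro y hy
      simp only [Pi.add_apply, Int.cast_add, add_mul, Finset.sum_add_distrib]
      rw [hsingle, hsingle]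
      have := LinearMap.congr_fun hi ⟨y, hy⟩
      simpa [coordF_apply] using this) (by
      have : ∀ l, (Pi.single i 1 + Pi.single j 1 : Fin 37 → ℤ) l ^ 2 =
          (if l = i then 1 else 0) + (if l = j then 1 else 0) := by
        intro l
        simp only [Pi.add_apply, Pi.single_apply]
        split_ifs <;> simp_all
      simp only [this, Finset.sum_add_distrib]
      simp)
    have := congrFun this i
    simp [Pi.single_apply, hij] at this
  have hcount := triple_count B h1 h2 hdim hde hmin
  set T := Finset.univ.filter (fun p : Fin 37 × Fin 37 × Fin 37 =>
        coordF B p.1 + coordF B p.2.1 + coordF B p.2.2 = 0) with hTdef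
  have hself : ∀ i, coordF B i + coordF B i = 0 := fun i => by
    ext c
    exact CharTwo.add_self_eq_zero _
  have hdist : ∀ p ∈ T, p.1 ≠ p.2.1 ∧ p.1 ≠ p.2.2 ∧ p.2.1 ≠ p.2.2 := by
    rintro ⟨i, j, k⟩ hp
    have hp : coordF B i + coordF B j + coordF B k = 0 := (Finset.mem_filter.1 hp).2
    refine ⟨?_, ?_, ?_⟩
    · rintro (rfl : i = j)
      rw [hself, zero_add] at hp
      exact h1 _ hp
    · rintro (rfl : i = k)
      rw [add_right_comm, hself, zero_add] at hp
      exact h1 _ hp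
    · rintro (rfl : j = k)
      rw [add_assoc, hself, add_zero] at hp
      exact h1 _ hp
  have hcv := card_triVec T hdist
  set V := (T ×ˢ (({1, -1} : Finset ℤ) ×ˢ ({1, -1} : Finset ℤ) ×ˢ
      ({1, -1} : Finset ℤ))).image triVec with hV
  have hV1120 : 1120 ≤ V.card := by omega
  let e : (Fin 37 → ℤ) → EuclideanSpace ℝ (Fin 37) := fun x => WithLp.toLp 2 (fun i => (x i : ℝ))
  have he : Function.Injective e := by
    intro x y hxy
    funext i
    have : (x i : ℝ) = (y i : ℝ) := congrArg (fun w : EuclideanSpace ℝ (Fin 37) => w i) hxy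
    exact_mod_cast this
  have hsub : ((V.image e : Finset _) : Set (EuclideanSpace ℝ (Fin 37))) ⊆
      {x ∈ constructionA4 C | normOf x = 3} := by
    intro w hw
    rw [Finset.mem_coe, Finset.mem_image] at hw
    obtain ⟨x, hx, rfl⟩ := hw
    rw [hV, Finset.mem_image] at hx
    obtain ⟨⟨⟨i, j, k⟩, a, b, c⟩, hp, rfl⟩ := hx
    rw [Finset.mem_product] at hp
    obtain ⟨hij, hik, hjk⟩ := hdist _ hp.1
    have hp0 : coordF B i + coordF B j + coordF B k = 0 := (Finset.mem_filter.1 hp.1).2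
    have hs := hp.2
    simp only [Finset.mem_product, Finset.mem_insert, Finset.mem_singleton] at hs
    obtain ⟨ha, hb, hc⟩ := hs
    have hodd : ∀ a : ℤ, a = 1 ∨ a = -1 → (a : ZMod 2) = 1 := by
      rintro a (rfl | rfl) <;> decide
    have hsq : ∀ a : ℤ, a = 1 ∨ a = -1 → a ^ 2 = 1 := by
      rintro a (rfl | rfl) <;> norm_num
    have hhalf : ∀ l, e (triVec ((i, j, k), (a, b, c))) l =
        ((2 * triVec ((i, j, k), (a, b, c)) l : ℤ) : ℝ) / 2 := by
      intro l
      push_cast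
      simp [e]
    refine ⟨⟨fun l => 2 * triVec ((i, j, k), (a, b, c)) l, ?_, hhalf⟩, ?_⟩
    · apply two_mul_mem hsd
      rw [← hBC]
      intro y hy
      simp only [triVec, Pi.add_apply, Int.cast_add, add_mul, Finset.sum_add_distrib]
      rw [hsingle, hsingle, hsingle, hodd a ha, hodd b hb, hodd c hc]
      have := LinearMap.congr_fun hp0 ⟨y, hy⟩
      simpa [coordF_apply] using this
    · rw [normOf_half _ _ hhalf]
      have : ∑ l, (2 * triVec ((i, j, k), (a, b, c)) l) ^ 2 = 12 := by
        simp only [mul_pow, ← Finset.mul_sum]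
        rw [sum_triVec_sq i j k a b c hij hik hjk, hsq a ha, hsq b hb, hsq c hc]
        norm_num
      rw [this]; norm_num
  have hfin : {x ∈ constructionA4 C | normOf x = 3}.Finite := by
    have := finite_norm C 3
    exact_mod_cast this
  have hkiss : 1120 ≤ numVecsOfNorm (constructionA4 C) 3 := by
    have := Set.ncard_le_ncard hsub hfin
    rw [Set.ncard_coe_finset, Finset.card_image_of_injective _ he] at this
    exact hV1120.trans this
  have hne : {x ∈ constructionA4 C | normOf x = 3}.Nonempty := by
    apply Set.nonempty_of_ncard_ne_zero
    have : 1120 ≤ Set.ncard {x ∈ constructionA4 C | normOf x = 3} := hkiss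
    omega
  obtain ⟨x, hxL, hx3⟩ := hne
  refine ⟨huni, ⟨x, hxL, 3, by decide, by rw [hx3]; norm_num⟩, ⟨⟨x, hxL, ?_, hx3⟩, ?_⟩, hkiss⟩
  · rintro rfl
    rw [normOf_eq_sum] at hx3
    simp at hx3
  · rintro s ⟨w, hw, hw0, rfl⟩
    exact hge w hw hw0
end
end
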